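/- arXiv:2203.17029 — 4 statements merged into one kernel-verified Lean document; each statement's English description precedes it below -/
import Mathlib

section
/- Let q ∈ ℂ with 0 < |q| < 1 and let t, λ, μ ∈ ℂ∖{0} satisfy λ ∉ q^ℤ, μ ∉ q^ℤ, λt ∉ q^ℤ and μt ∉ q^ℤ. Then AL(t,λ,q) − AL(t,μ,q) = − (q;q)_∞³ · θ(λ^{−1}μ;q) · θ(λ^{−1}μ^{−1}t^{−1};q) / ( θ(λ^{−1};q) · θ(μ;q) · θ(λ^{−1}t^{−1};q) · θ(μ^{−1}t^{−1};q) ). -/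
open Finset Filter

/-- Finite q-Pochhammer symbol `(x;q)_k = ∏_{j=0}^{k-1} (1 - x q^j)`. -/
noncomputable def qPoch (x q : ℂ) (k : ℕ) : ℂ := ∏ j ∈ Finset.range k, (1 - x * q ^ j)

/-- Infinite q-Pochhammer symbol `(x;q)_∞ = ∏_{j=0}^{∞} (1 - x q^j)`. -/
noncomputable def qPochInf (x q : ℂ) : ℂ := ∏' j : ℕ, (1 - x * q ^ j)

/-- The Jacobi theta function `θ(t;q) = Σ_{k∈ℤ} (−1)^k q^{k(k+1)/2} t^k`. -/
noncomputable def jtheta (t q : ℂ) : ℂ :=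
  ∑' k : ℤ, (-1 : ℂ) ^ k * q ^ (k * (k + 1) / 2) * t ^ k

/-- The derivative `θ'(t;q) = Σ_{k∈ℤ} (−1)^k k q^{k(k+1)/2} t^k` (with respect to t d/dt). -/
noncomputable def jthetaD (t q : ℂ) : ℂ :=
  ∑' k : ℤ, (-1 : ℂ) ^ k * (k : ℂ) * q ^ (k * (k + 1) / 2) * t ^ k

/-- The Eisenstein-type series `E₁(q) = 1 − 4 Σ_{j=1}^∞ q^j/(1−q^j)`. -/
noncomputable def E1 (q : ℂ) : ℂ := 1 - 4 * ∑' j : ℕ, q ^ (j + 1) / (1 - q ^ (j + 1))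

/-- The Appell-Lerch sum
`AL(t,λ,q) = θ(λ;q)⁻¹ Σ_{ℓ∈ℤ} (−1)^ℓ q^{ℓ(ℓ+1)/2} λ^ℓ / (1 − λ t q^ℓ)`. -/
noncomputable def AL (t lam q : ℂ) : ℂ :=
  (jtheta lam q)⁻¹ *
    ∑' k : ℤ, (-1 : ℂ) ^ k * q ^ (k * (k + 1) / 2) * lam ^ k / (1 - lam * t * q ^ k)

/-- The solution `g^{(0,0)}(t,q) = Σ_{k≥0} (−1)^k q^{k(k+1)/2} (q;q)_k^{−2} t^{−1−k}`. -/
noncomputable def g00 (t q : ℂ) : ℂ :=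
  ∑' k : ℕ, (-1 : ℂ) ^ k * q ^ (k * (k + 1) / 2) / (qPoch q q k) ^ 2 * t ^ (-1 - (k : ℤ))

/-- The solution `g^{(0,1)}(t,q)`. -/
noncomputable def g01 (t q : ℂ) : ℂ :=
  ∑' k : ℕ,
    (E1 q / 2 - 1 / 2 - jthetaD t⁻¹ q / jtheta t⁻¹ q +
        ∑ j ∈ Finset.range k, (1 + q ^ (j + 1)) / (1 - q ^ (j + 1))) *
      ((-1 : ℂ) ^ k * q ^ (k * (k + 1) / 2) / (qPoch q q k) ^ 2 * t ^ (-1 - (k : ℤ)))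

/-!
Multiplying `AL(t,x,q)` by `θ(x) θ(xt)` removes its poles and gives a holomorphic function `N` on
`ℂ ∖ {0}` with `x² N(qx) = (q²t)⁻¹ N(x)`; the products `θ(ax) θ(bx)` with `ab = t` satisfy the same
functional equation. Dividing out theta functions and applying Liouville's theorem shows that a
solution vanishing at two points `a`, `b` inequivalent modulo `q^ℤ` is zero, provided that
`abt ∉ q^ℤ`. For the zeros `y` and `t⁻¹` these conditions are `yt ∉ q^ℤ` and `y ∉ q^ℤ`. The linear
combination `θ(y) θ(yt) N(x) - θ(x) θ(xt) N(y)` vanishes at `x = y`, so subtracting the multiple of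
`θ(y⁻¹x) θ(ytx)` that makes it vanish at `x = t⁻¹` as well yields the three-term relation behind the
formula. At `t⁻¹` a single term of `N` survives, and the triple product evaluates it as `-(q;q)_∞³`.
-/

open scoped Topology

variable {q : ℂ}

/-! ### Coefficients and functional equations of the theta series -/

/-- The coefficient `(-1)^k q^{k(k+1)/2}` of the theta series, which `AL` shares with `jtheta`. -/
noncomputable def thetaCoeff (q : ℂ) (k : ℤ) : ℂ := (-1 : ℂ) ^ k * q ^ (k * (k + 1) / 2)

lemma jtheta_eq_tsum (x q : ℂ) : jtheta x q = ∑' k : ℤ, thetaCoeff q k * x ^ k := rfl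

lemma AL_eq_inv_mul_tsum (t x q : ℂ) :
    AL t x q = (jtheta x q)⁻¹ * ∑' k : ℤ, thetaCoeff q k * x ^ k / (1 - x * t * q ^ k) := rfl

lemma add_mul_add_one_ediv_two (k j : ℤ) :
    (k + j) * (k + j + 1) / 2 = k * (k + 1) / 2 + j * (j + 1) / 2 + k * j := by
  obtain ⟨a, ha⟩ := Int.even_mul_succ_self k
  obtain ⟨b, hb⟩ := Int.even_mul_succ_self j
  have hab : (k + j) * (k + j + 1) = 2 * (a + b + k * j) := by linear_combination ha + hb
  rw [hab, ha, hb]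
  lia

lemma thetaCoeff_zero (q : ℂ) : thetaCoeff q 0 = 1 := by simp [thetaCoeff]

lemma thetaCoeff_ne_zero (hq : q ≠ 0) (k : ℤ) : thetaCoeff q k ≠ 0 :=
  mul_ne_zero (zpow_ne_zero _ (by norm_num)) (zpow_ne_zero _ hq)

lemma thetaCoeff_add (hq : q ≠ 0) (k j : ℤ) :
    thetaCoeff q (k + j) = thetaCoeff q k * thetaCoeff q j * q ^ (k * j) := by
  simp only [thetaCoeff]
  rw [add_mul_add_one_ediv_two, zpow_add₀ hq, zpow_add₀ hq, zpow_add₀ (by norm_num)]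
  ring

lemma thetaCoeff_add_one (hq : q ≠ 0) (k : ℤ) :
    thetaCoeff q (k + 1) = -q ^ (k + 1) * thetaCoeff q k := by
  rw [thetaCoeff_add hq, zpow_add₀ hq, show thetaCoeff q 1 = -q by simp [thetaCoeff]]
  simp only [mul_one, zpow_one]
  ring

lemma thetaCoeff_neg_one_sub (q : ℂ) (k : ℤ) : thetaCoeff q (-1 - k) = -thetaCoeff q k := by
  have hexp : (-1 - k) * (-1 - k + 1) = k * (k + 1) := by ring
  have hsign : (-1 : ℂ) ^ (-1 - k) = -(-1) ^ k := by
    rw [zpow_sub₀ (by norm_num), zpow_neg_one]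
    rcases Int.even_or_odd k with hk | hk <;> simp [hk.neg_one_zpow]
  rw [thetaCoeff, thetaCoeff, hexp, hsign, neg_mul]

lemma summable_thetaCoeff_mul_pow (hq : q ≠ 0) (hq1 : ‖q‖ < 1) {x : ℂ} (hx : x ≠ 0) :
    Summable fun n : ℕ ↦ thetaCoeff q n * x ^ n := by
  refine summable_of_ratio_test_tendsto_lt_one (l := 0) one_pos
    (.of_forall fun n ↦ mul_ne_zero (thetaCoeff_ne_zero hq _) (pow_ne_zero _ hx)) ?_
  have hratio (n : ℕ) : ‖thetaCoeff q (n + 1 : ℕ) * x ^ (n + 1)‖ / ‖thetaCoeff q n * x ^ n‖ =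
      ‖q‖ ^ n * (‖q‖ * ‖x‖) := by
    have hcoeff := norm_ne_zero_iff.mpr (thetaCoeff_ne_zero hq n)
    have hx' := norm_ne_zero_iff.mpr hx
    rw [Nat.cast_succ, thetaCoeff_add_one hq, zpow_add_one₀ hq, pow_succ]
    simp only [norm_mul, norm_neg, zpow_natCast, norm_pow]
    field_simp
  simp_rw [hratio]
  simpa using (tendsto_pow_atTop_nhds_zero_of_lt_one (norm_nonneg q) hq1).mul_const (‖q‖ * ‖x‖)

lemma summable_thetaCoeff_mul_zpow (hq : q ≠ 0) (hq1 : ‖q‖ < 1) {x : ℂ} (hx : x ≠ 0) :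
    Summable fun k : ℤ ↦ thetaCoeff q k * x ^ k := by
  refine Summable.of_nat_of_neg_add_one ?_ ?_
  · simpa using summable_thetaCoeff_mul_pow hq hq1 hx
  · refine ((summable_thetaCoeff_mul_pow hq hq1 (inv_ne_zero hx)).mul_left (-x⁻¹)).congr
      fun n ↦ ?_
    rw [show -((n : ℤ) + 1) = -1 - n by ring, thetaCoeff_neg_one_sub, zpow_sub₀ hx, zpow_natCast,
      inv_pow, zpow_neg_one]
    ring

lemma thetaCoeff_mul_zpow_mul_jtheta (hq : q ≠ 0) {x : ℂ} (hx : x ≠ 0) (k : ℤ) :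
    thetaCoeff q k * x ^ k * jtheta (x * q ^ k) q = jtheta x q := by
  rw [jtheta_eq_tsum, jtheta_eq_tsum, ← tsum_mul_left,
    ← (Equiv.addLeft k).tsum_eq fun n ↦ thetaCoeff q n * x ^ n]
  refine tsum_congr fun n ↦ ?_
  rw [Equiv.coe_addLeft, thetaCoeff_add hq, zpow_add₀ hx, mul_zpow, zpow_mul]
  ring

lemma jtheta_inv {x : ℂ} (hx : x ≠ 0) : jtheta x⁻¹ q = -x * jtheta x q := by
  rw [jtheta_eq_tsum, jtheta_eq_tsum, ← tsum_mul_left, ← (Equiv.subLeft (-1 : ℤ)).tsum_eq]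
  refine tsum_congr fun n ↦ ?_
  rw [Equiv.subLeft_apply, thetaCoeff_neg_one_sub, zpow_sub₀ (inv_ne_zero hx), zpow_neg_one,
    inv_inv, inv_zpow, div_inv_eq_mul]
  ring

lemma jtheta_one (q : ℂ) : jtheta 1 q = 0 := by
  have h := jtheta_inv (q := q) one_ne_zero
  rw [inv_one] at h
  linear_combination h / 2

lemma jtheta_zpow (hq : q ≠ 0) (k : ℤ) : jtheta (q ^ k) q = 0 := by
  have h := thetaCoeff_mul_zpow_mul_jtheta hq one_ne_zero k
  rw [jtheta_one, one_zpow, mul_one, one_mul] at h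
  exact (mul_eq_zero.mp h).resolve_left (thetaCoeff_ne_zero hq k)

/-! ### q-Pochhammer symbols -/

lemma qPoch_succ (x q : ℂ) (n : ℕ) : qPoch x q (n + 1) = qPoch x q n * (1 - x * q ^ n) :=
  prod_range_succ _ n

lemma qPoch_succ' (x q : ℂ) (n : ℕ) : qPoch x q (n + 1) = (1 - x) * qPoch (q * x) q n := by
  rw [qPoch, prod_range_succ', mul_comm, pow_zero, mul_one]
  exact congrArg _ (prod_congr rfl fun j _ ↦ by ring)

lemma one_sub_pow_succ_ne_zero (hq1 : ‖q‖ < 1) (j : ℕ) : 1 - q * q ^ j ≠ 0 := by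
  rw [← pow_succ', sub_ne_zero]
  intro h
  have hlt : ‖q‖ ^ (j + 1) < 1 := pow_lt_one₀ (norm_nonneg q) hq1 j.succ_ne_zero
  rw [← norm_pow, ← h, norm_one] at hlt
  exact hlt.false

lemma summable_norm_neg_mul_pow (hq1 : ‖q‖ < 1) (x : ℂ) :
    Summable fun j : ℕ ↦ ‖-(x * q ^ j)‖ := by
  simpa only [norm_neg, norm_mul, norm_pow] using
    (summable_geometric_of_lt_one (norm_nonneg q) hq1).mul_left ‖x‖

lemma tendsto_qPoch (hq1 : ‖q‖ < 1) (x : ℂ) :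
    Tendsto (qPoch x q) atTop (𝓝 (qPochInf x q)) := by
  have h := (multipliable_one_add_of_summable
    (summable_norm_neg_mul_pow hq1 x)).hasProd.tendsto_prod_nat
  simp only [← sub_eq_add_neg] at h
  exact h

lemma qPochInf_ne_zero (hq1 : ‖q‖ < 1) {x : ℂ} (hx : ∀ j : ℕ, 1 - x * q ^ j ≠ 0) :
    qPochInf x q ≠ 0 := by
  simp only [sub_eq_add_neg] at hx
  simpa only [qPochInf, sub_eq_add_neg] using
    tprod_one_add_ne_zero_of_summable hx (summable_norm_neg_mul_pow hq1 x)

lemma qPochInf_self_ne_zero (hq1 : ‖q‖ < 1) : qPochInf q q ≠ 0 :=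
  qPochInf_ne_zero hq1 (one_sub_pow_succ_ne_zero hq1)

lemma qPochInf_eq_one_sub_mul (hq1 : ‖q‖ < 1) (x : ℂ) :
    qPochInf x q = (1 - x) * qPochInf (q * x) q := by
  refine tendsto_nhds_unique ((tendsto_add_atTop_iff_nat 1).mpr (tendsto_qPoch hq1 x)) ?_
  simpa only [qPoch_succ'] using (tendsto_qPoch hq1 (q * x)).const_mul (1 - x)

lemma differentiable_qPochInf (hq1 : ‖q‖ < 1) : Differentiable ℂ fun x ↦ qPochInf x q := by
  intro x₀
  have hbound : ∀ᶠ j : ℕ in atTop, ∀ x ∈ Metric.ball (0 : ℂ) (‖x₀‖ + 1),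
      ‖-(x * q ^ j)‖ ≤ (‖x₀‖ + 1) * ‖q‖ ^ j := .of_forall fun j x hx ↦ by
    rw [norm_neg, norm_mul, norm_pow]
    gcongr
    exact (mem_ball_zero_iff.mp hx).le
  have hprod := Summable.hasProdLocallyUniformlyOn_nat_one_add Metric.isOpen_ball
    ((summable_geometric_of_lt_one (norm_nonneg q) hq1).mul_left _) hbound
    fun j ↦ by fun_prop
  have hdiff := hprod.differentiableOn
    (.of_forall fun s ↦ by fun_prop) Metric.isOpen_ball
  simp only [← sub_eq_add_neg] at hdiff
  exact hdiff.differentiableAt (Metric.isOpen_ball.mem_nhds (by simp))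

/-! ### The Jacobi triple product -/

/-- `1 / (q;q)_m`, extended by zero to negative `m` so that the q-binomial coefficients
`(q;q)_{a+b} / ((q;q)_a (q;q)_b)` can be indexed by integers. -/
noncomputable def invQPoch (q : ℂ) (m : ℤ) : ℂ := if m < 0 then 0 else (qPoch q q m.toNat)⁻¹

lemma invQPoch_of_neg {m : ℤ} (hm : m < 0) : invQPoch q m = 0 := if_pos hm

lemma invQPoch_natCast (q : ℂ) (n : ℕ) : invQPoch q n = (qPoch q q n)⁻¹ := by
  simp [invQPoch]

lemma invQPoch_sub_one (hq1 : ‖q‖ < 1) (m : ℤ) :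
    invQPoch q (m - 1) = (1 - q ^ m) * invQPoch q m := by
  rcases lt_trichotomy m 0 with hm | rfl | hm
  · rw [invQPoch_of_neg hm, invQPoch_of_neg (by lia), mul_zero]
  · simp [invQPoch]
  · obtain ⟨n, rfl⟩ : ∃ n : ℕ, m = (n + 1 : ℕ) := ⟨(m - 1).toNat, by lia⟩
    have hn := one_sub_pow_succ_ne_zero hq1 n
    rw [show ((n + 1 : ℕ) : ℤ) - 1 = n by simp, invQPoch_natCast, invQPoch_natCast, qPoch_succ,
      mul_inv, zpow_natCast, pow_succ']
    field_simp

lemma invQPoch_mul_pascal (hq : q ≠ 0) (hq1 : ‖q‖ < 1) (a b : ℤ) :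
    (1 - q ^ (a + b)) * (invQPoch q a * invQPoch q b) =
      invQPoch q (a - 1) * invQPoch q b + q ^ a * (invQPoch q a * invQPoch q (b - 1)) := by
  rw [invQPoch_sub_one hq1 a, invQPoch_sub_one hq1 b, zpow_add₀ hq]
  ring

/-- The term of index `k` in the finite form of the Jacobi triple product. -/
noncomputable def finiteThetaTerm (q x : ℂ) (m n : ℕ) (k : ℤ) : ℂ :=
  qPoch q q (m + n) * (invQPoch q (n - k) * invQPoch q (m + k)) * (thetaCoeff q k * x ^ k)

lemma finiteThetaTerm_succ_right (hq : q ≠ 0) (hq1 : ‖q‖ < 1) {x : ℂ} (hx : x ≠ 0) (m n : ℕ)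
    (k : ℤ) : finiteThetaTerm q x m (n + 1) k =
      finiteThetaTerm q x m n k - q * x * q ^ n * finiteThetaTerm q x m n (k - 1) := by
  have hpascal := invQPoch_mul_pascal hq hq1 (n + 1 - k) (m + k)
  rw [show (n + 1 - k + (m + k) : ℤ) = (m + n + 1 : ℕ) by push_cast; ring, zpow_natCast,
    pow_succ', show (n + 1 - k - 1 : ℤ) = n - k by ring] at hpascal
  have hcoeff := thetaCoeff_add_one hq (k - 1)
  rw [sub_add_cancel] at hcoeff
  have hpow : q ^ ((n : ℤ) + 1 - k) * q ^ k = q * q ^ n := by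
    rw [← zpow_add₀ hq, sub_add_cancel, zpow_add_one₀ hq, zpow_natCast, mul_comm]
  simp only [finiteThetaTerm]
  rw [← add_assoc, qPoch_succ, hcoeff, zpow_sub_one₀ hx, Nat.cast_succ,
    show (n - (k - 1) : ℤ) = n + 1 - k by ring, show (m + (k - 1) : ℤ) = m + k - 1 by ring]
  field_simp
  linear_combination
    -(qPoch q q (m + n) * q ^ k * thetaCoeff q (k - 1)) * hpascal
      - qPoch q q (m + n) * thetaCoeff q (k - 1) * invQPoch q (n + 1 - k)
        * invQPoch q (m + k - 1) * hpow

lemma finiteThetaTerm_succ_left (hq : q ≠ 0) (hq1 : ‖q‖ < 1) {x : ℂ} (hx : x ≠ 0) (m n : ℕ)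
    (k : ℤ) : finiteThetaTerm q x (m + 1) n k =
      finiteThetaTerm q x m n k - x⁻¹ * q ^ m * finiteThetaTerm q x m n (k + 1) := by
  have hpascal := invQPoch_mul_pascal hq hq1 (m + 1 + k) (n - k)
  rw [show (m + 1 + k + (n - k) : ℤ) = (m + n + 1 : ℕ) by push_cast; ring, zpow_natCast,
    pow_succ', show (m + 1 + k - 1 : ℤ) = m + k by ring,
    show (m + 1 + k : ℤ) = m + (k + 1) by ring, zpow_add₀ hq (m : ℤ), zpow_natCast] at hpascal
  simp only [finiteThetaTerm]
  rw [add_right_comm, qPoch_succ, thetaCoeff_add_one hq, zpow_add_one₀ hx, Nat.cast_succ,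
    show (n - (k + 1) : ℤ) = n - k - 1 by ring, show (m + 1 + k : ℤ) = m + (k + 1) by ring]
  field_simp
  linear_combination qPoch q q (m + n) * thetaCoeff q k * hpascal

lemma hasSum_finiteThetaTerm (hq : q ≠ 0) (hq1 : ‖q‖ < 1) {x : ℂ} (hx : x ≠ 0) (m n : ℕ) :
    HasSum (finiteThetaTerm q x m n) (qPoch (q * x) q n * qPoch x⁻¹ q m) := by
  induction n with
  | zero =>
    induction m with
    | zero =>
      have hzero : qPoch (q * x) q 0 * qPoch x⁻¹ q 0 = finiteThetaTerm q x 0 0 0 := by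
        simp [qPoch, finiteThetaTerm, invQPoch, thetaCoeff_zero]
      rw [hzero]
      refine hasSum_single 0 fun k hk ↦ ?_
      rcases lt_or_gt_of_ne hk with hk | hk <;> simp [finiteThetaTerm, invQPoch, hk]
    | succ m ih =>
      have hshift := (Equiv.addRight (1 : ℤ)).hasSum_iff.mpr ih
      rw [qPoch_succ, show ∀ A B C : ℂ, A * (B * (1 - C)) = A * B - C * (A * B) by intros; ring]
      exact (ih.sub (hshift.mul_left _)).congr_fun fun k ↦ finiteThetaTerm_succ_left hq hq1 hx m 0 k
  | succ n ih =>
    have hshift := (Equiv.subRight (1 : ℤ)).hasSum_iff.mpr ih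
    rw [qPoch_succ, show ∀ A B C : ℂ, A * (1 - C) * B = A * B - C * (A * B) by intros; ring]
    exact (ih.sub (hshift.mul_left _)).congr_fun fun k ↦ finiteThetaTerm_succ_right hq hq1 hx m n k

lemma tendsto_invQPoch (hq1 : ‖q‖ < 1) (k : ℤ) :
    Tendsto (fun n : ℕ ↦ invQPoch q (n + k)) atTop (𝓝 (qPochInf q q)⁻¹) := by
  have hindex : Tendsto (fun n : ℕ ↦ (n + k).toNat) atTop atTop :=
    tendsto_atTop.mpr fun b ↦ by
      filter_upwards [eventually_ge_atTop (b + k.natAbs)] with n hn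
      lia
  refine (((tendsto_qPoch hq1 q).inv₀ (qPochInf_self_ne_zero hq1)).comp hindex).congr' ?_
  filter_upwards [eventually_ge_atTop k.natAbs] with n hn
  rw [invQPoch, if_neg (by lia), Function.comp_apply]

lemma exists_norm_qPoch_self_le (hq1 : ‖q‖ < 1) : ∃ M, ∀ n, ‖qPoch q q n‖ ≤ M := by
  obtain ⟨M, hM⟩ := (Metric.isBounded_range_of_tendsto _ (tendsto_qPoch hq1 q)).exists_norm_le
  exact ⟨M, fun n ↦ hM _ ⟨n, rfl⟩⟩

lemma exists_norm_invQPoch_le (hq1 : ‖q‖ < 1) : ∃ M, ∀ m, ‖invQPoch q m‖ ≤ M := by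
  obtain ⟨M, hM⟩ := (Metric.isBounded_range_of_tendsto _
    ((tendsto_qPoch hq1 q).inv₀ (qPochInf_self_ne_zero hq1))).exists_norm_le
  have hM' (n : ℕ) : ‖(qPoch q q n)⁻¹‖ ≤ M := hM _ ⟨n, rfl⟩
  refine ⟨M, fun m ↦ ?_⟩
  rw [invQPoch]
  split_ifs
  · simpa using (norm_nonneg _).trans (hM' 0)
  · exact hM' _

lemma tendsto_finiteThetaTerm (hq1 : ‖q‖ < 1) (x : ℂ) (k : ℤ) :
    Tendsto (fun n : ℕ ↦ finiteThetaTerm q x n n k) atTop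
      (𝓝 ((qPochInf q q)⁻¹ * (thetaCoeff q k * x ^ k))) := by
  have hdouble : Tendsto (fun n : ℕ ↦ n + n) atTop atTop := tendsto_id.atTop_add_atTop tendsto_id
  have h := (((tendsto_qPoch hq1 q).comp hdouble).mul
    ((tendsto_invQPoch hq1 (-k)).mul (tendsto_invQPoch hq1 k))).mul_const (thetaCoeff q k * x ^ k)
  rwa [mul_inv_cancel_left₀ (qPochInf_self_ne_zero hq1)] at h

theorem jtheta_eq_qPochInf_mul (hq : q ≠ 0) (hq1 : ‖q‖ < 1) {x : ℂ} (hx : x ≠ 0) :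
    jtheta x q = qPochInf q q * (qPochInf (q * x) q * qPochInf x⁻¹ q) := by
  obtain ⟨M, hM⟩ := exists_norm_qPoch_self_le hq1
  obtain ⟨L, hL⟩ := exists_norm_invQPoch_le hq1
  have hM0 : 0 ≤ M := (norm_nonneg _).trans (hM 0)
  have hL0 : 0 ≤ L := (norm_nonneg _).trans (hL 0)
  have hseries : Tendsto (fun n : ℕ ↦ ∑' k, finiteThetaTerm q x n n k) atTop
      (𝓝 (∑' k, (qPochInf q q)⁻¹ * (thetaCoeff q k * x ^ k))) := by
    refine tendsto_tsum_of_dominated_convergence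
      (bound := fun k ↦ M * (L * L) * ‖thetaCoeff q k * x ^ k‖)
      ((summable_thetaCoeff_mul_zpow hq hq1 hx).norm.mul_left _) (tendsto_finiteThetaTerm hq1 x)
      (.of_forall fun n k ↦ ?_)
    rw [finiteThetaTerm, norm_mul, norm_mul, norm_mul]
    gcongr
    exacts [hM _, hL _, hL _]
  simp only [(hasSum_finiteThetaTerm hq hq1 hx _ _).tsum_eq] at hseries
  have hproduct := (tendsto_qPoch hq1 (q * x)).mul (tendsto_qPoch hq1 x⁻¹)
  rw [tendsto_nhds_unique hproduct hseries, tsum_mul_left, ← jtheta_eq_tsum,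
    mul_inv_cancel_left₀ (qPochInf_self_ne_zero hq1)]

theorem jtheta_eq_zero_iff (hq : q ≠ 0) (hq1 : ‖q‖ < 1) {x : ℂ} (hx : x ≠ 0) :
    jtheta x q = 0 ↔ ∃ n : ℤ, x = q ^ n := by
  refine ⟨fun hzero ↦ ?_, fun ⟨n, hn⟩ ↦ hn ▸ jtheta_zpow hq n⟩
  contrapose! hzero
  rw [jtheta_eq_qPochInf_mul hq hq1 hx]
  refine mul_ne_zero (qPochInf_self_ne_zero hq1)
    (mul_ne_zero (qPochInf_ne_zero hq1 fun j hj ↦ ?_) (qPochInf_ne_zero hq1 fun j hj ↦ ?_))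
  · refine hzero (-(j + 1 : ℕ)) ?_
    rw [zpow_neg, zpow_natCast]
    exact eq_inv_of_mul_eq_one_left (by linear_combination -hj)
  · refine hzero j ?_
    rw [zpow_natCast]
    field_simp at hj
    linear_combination hj

/-! ### Zeros of the theta function -/

/-- The holomorphic extension to `{0}ᶜ` of `θ(x;q) / (1 - x)`, read off the triple product. -/
noncomputable def jthetaCofactor (x q : ℂ) : ℂ :=
  -x⁻¹ * (qPochInf q q * (qPochInf (q * x) q * qPochInf (q * x⁻¹) q))

lemma one_sub_mul_jthetaCofactor (hq : q ≠ 0) (hq1 : ‖q‖ < 1) {x : ℂ} (hx : x ≠ 0) :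
    (1 - x) * jthetaCofactor x q = jtheta x q := by
  rw [jtheta_eq_qPochInf_mul hq hq1 hx, qPochInf_eq_one_sub_mul hq1 x⁻¹, jthetaCofactor]
  field_simp
  ring

lemma jthetaCofactor_one (q : ℂ) : jthetaCofactor 1 q = -qPochInf q q ^ 3 := by
  rw [jthetaCofactor, inv_one, mul_one]
  ring

lemma jtheta_ne_zero (hq : q ≠ 0) (hq1 : ‖q‖ < 1) {x : ℂ} (hx : x ≠ 0)
    (hxq : ∀ n : ℤ, x ≠ q ^ n) : jtheta x q ≠ 0 := by
  simpa [jtheta_eq_zero_iff hq hq1 hx] using hxq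

lemma differentiableOn_jthetaCofactor (hq1 : ‖q‖ < 1) :
    DifferentiableOn ℂ (fun x ↦ jthetaCofactor x q) {0}ᶜ := by
  have hinv : DifferentiableOn ℂ (fun x : ℂ ↦ x⁻¹) {0}ᶜ := differentiableOn_inv
  have hpoch := differentiable_qPochInf hq1
  have hleft : DifferentiableOn ℂ (fun x ↦ qPochInf (q * x) q) {0}ᶜ :=
    (hpoch.comp (differentiable_id.const_mul q)).differentiableOn
  have hright : DifferentiableOn ℂ (fun x ↦ qPochInf (q * x⁻¹) q) {0}ᶜ :=
    hpoch.comp_differentiableOn (hinv.const_mul q)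
  exact hinv.neg.mul ((hleft.mul hright).const_mul _)

lemma differentiableOn_jtheta (hq : q ≠ 0) (hq1 : ‖q‖ < 1) :
    DifferentiableOn ℂ (fun x ↦ jtheta x q) {0}ᶜ :=
  ((differentiableOn_id.const_sub 1).mul (differentiableOn_jthetaCofactor hq1)).congr
    fun _ hx ↦ (one_sub_mul_jthetaCofactor hq hq1 hx).symm

/-- The holomorphic extension to `{0}ᶜ` of `θ(x;q) / (1 - x q^k)`. -/
noncomputable def jthetaQuotient (q : ℂ) (k : ℤ) (x : ℂ) : ℂ :=
  thetaCoeff q k * x ^ k * jthetaCofactor (x * q ^ k) q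

lemma one_sub_mul_jthetaQuotient (hq : q ≠ 0) (hq1 : ‖q‖ < 1) {x : ℂ} (hx : x ≠ 0) (k : ℤ) :
    (1 - x * q ^ k) * jthetaQuotient q k x = jtheta x q := by
  have hxk : x * q ^ k ≠ 0 := mul_ne_zero hx (zpow_ne_zero k hq)
  rw [← thetaCoeff_mul_zpow_mul_jtheta hq hx k, ← one_sub_mul_jthetaCofactor hq hq1 hxk,
    jthetaQuotient]
  ring

lemma differentiableOn_jthetaQuotient (hq : q ≠ 0) (hq1 : ‖q‖ < 1) (k : ℤ) :
    DifferentiableOn ℂ (jthetaQuotient q k) {0}ᶜ := by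
  have hzpow : DifferentiableOn ℂ (fun x : ℂ ↦ x ^ k) {0}ᶜ := fun x hx ↦
    (differentiableAt_zpow.mpr (.inl hx)).differentiableWithinAt
  exact (hzpow.const_mul _).mul ((differentiableOn_jthetaCofactor hq1).comp
    (differentiableOn_id.mul_const _) fun _ hx ↦ mul_ne_zero hx (zpow_ne_zero k hq))

lemma jthetaQuotient_succ_eq (hq : q ≠ 0) {x : ℂ} (hx : x ≠ 0) (k : ℤ) :
    jthetaQuotient q (k + 1) x = -q * x * jthetaQuotient q k (q * x) := by
  rw [jthetaQuotient, jthetaQuotient, thetaCoeff_add_one hq, zpow_add_one₀ hx, zpow_add_one₀ hq,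
    mul_zpow, show x * (q ^ k * q) = q * x * q ^ k by ring]
  ring

lemma jthetaQuotient_zero_one (q : ℂ) : jthetaQuotient q 0 1 = -qPochInf q q ^ 3 := by
  simp [jthetaQuotient, thetaCoeff_zero, jthetaCofactor_one]

lemma eq_zero_of_norm_zpow_eq_one (hq1 : ‖q‖ < 1) {k : ℤ} (hk : ‖q ^ k‖ = 1) : k = 0 :=
  (zpow_eq_one_iff_right₀ (norm_nonneg q) hq1.ne).mp (norm_zpow q k ▸ hk)

lemma jthetaQuotient_one_of_ne_zero (hq : q ≠ 0) (hq1 : ‖q‖ < 1) {k : ℤ} (hk : k ≠ 0) :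
    jthetaQuotient q k 1 = 0 := by
  have h := one_sub_mul_jthetaQuotient hq hq1 one_ne_zero k
  rw [jtheta_one, one_mul, mul_eq_zero, sub_eq_zero] at h
  exact h.resolve_left fun h1 ↦ hk (eq_zero_of_norm_zpow_eq_one hq1 (by rw [← h1, norm_one]))

theorem deriv_jtheta_ne_zero (hq : q ≠ 0) (hq1 : ‖q‖ < 1) {x : ℂ} (hx : x ≠ 0)
    (hzero : jtheta x q = 0) : deriv (fun y ↦ jtheta y q) x ≠ 0 := by
  obtain ⟨n, rfl⟩ := (jtheta_eq_zero_iff hq hq1 hx).mp hzero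
  have hcancel : q ^ n * q ^ (-n) = 1 := by rw [← zpow_add₀ hq, add_neg_cancel, zpow_zero]
  have hnhds := isOpen_compl_singleton.mem_nhds hx
  have hlinear : HasDerivAt (fun y : ℂ ↦ 1 - y * q ^ (-n)) (-q ^ (-n)) (q ^ n) := by
    simpa using ((hasDerivAt_id (q ^ n)).mul_const (q ^ (-n))).const_sub 1
  have hquotient := ((differentiableOn_jthetaQuotient hq hq1 (-n)).differentiableAt
    hnhds).hasDerivAt
  have hderiv : HasDerivAt (fun y ↦ jtheta y q)
      (-q ^ (-n) * jthetaQuotient q (-n) (q ^ n)) (q ^ n) := by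
    refine ((hlinear.mul hquotient).congr_of_eventuallyEq ?_).congr_deriv ?_
    · filter_upwards [hnhds] with y hy using (one_sub_mul_jthetaQuotient hq hq1 hy (-n)).symm
    · rw [hcancel, sub_self, zero_mul, add_zero]
  rw [hderiv.deriv, jthetaQuotient, hcancel, jthetaCofactor_one]
  exact mul_ne_zero (neg_ne_zero.mpr (zpow_ne_zero _ hq))
    (mul_ne_zero (mul_ne_zero (thetaCoeff_ne_zero hq _) (zpow_ne_zero _ hx))
      (neg_ne_zero.mpr (pow_ne_zero 3 (qPochInf_self_ne_zero hq1))))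

lemma jtheta_neg_one_ne_zero (hq : q ≠ 0) (hq1 : ‖q‖ < 1) : jtheta (-1) q ≠ 0 := by
  refine jtheta_ne_zero hq hq1 (neg_ne_zero.mpr one_ne_zero) fun n hn ↦ ?_
  rw [eq_zero_of_norm_zpow_eq_one hq1 (k := n) (by rw [← hn, norm_neg, norm_one])] at hn
  norm_num at hn

/-! ### Dividing out simple zeros -/

theorem exists_differentiableOn_eq_mul {U : Set ℂ} (hU : IsOpen U) {f g : ℂ → ℂ}
    (hf : DifferentiableOn ℂ f U) (hg : DifferentiableOn ℂ g U)
    (hzero : ∀ p ∈ U, g p = 0 → f p = 0 ∧ deriv g p ≠ 0) :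
    ∃ h, DifferentiableOn ℂ h U ∧ ∀ x ∈ U, f x = g x * h x := by
  classical
  let h (x : ℂ) : ℂ := if g x = 0 then deriv f x / deriv g x else f x / g x
  refine ⟨h, fun p hp ↦ DifferentiableAt.differentiableWithinAt ?_, fun x hx ↦ ?_⟩
  · have hUp := hU.mem_nhds hp
    by_cases hgp : g p = 0
    · obtain ⟨hfp, hderiv⟩ := hzero p hp hgp
      have hf' := ((Complex.differentiableOn_dslope hUp).mpr hf).differentiableAt hUp
      have hg' := ((Complex.differentiableOn_dslope hUp).mpr hg).differentiableAt hUp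
      rw [← dslope_same] at hderiv
      refine (hf'.div hg' hderiv).congr_of_eventuallyEq ?_
      filter_upwards [hg'.continuousAt.eventually_ne hderiv] with x hx
      rcases eq_or_ne x p with rfl | hxp
      · simp [h, hgp]
      · have hfx := sub_smul_dslope f p x
        have hgx := sub_smul_dslope g p x
        rw [hfp, sub_zero, smul_eq_mul] at hfx
        rw [hgp, sub_zero, smul_eq_mul] at hgx
        have hxp' := sub_ne_zero.mpr hxp
        rw [Pi.div_apply, ← mul_div_mul_left _ _ hxp', hfx, hgx]
        exact if_neg (hgx ▸ mul_ne_zero hxp' hx)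
    · refine ((hf.differentiableAt hUp).div (hg.differentiableAt hUp) hgp).congr_of_eventuallyEq ?_
      filter_upwards [(hg.differentiableAt hUp).continuousAt.eventually_ne hgp] with x hx
      exact if_neg hx
  · by_cases hgx : g x = 0
    · rw [hgx, zero_mul, (hzero x hx hgx).1]
    · rw [show h x = f x / g x from if_neg hgx, mul_div_cancel₀ _ hgx]

/-! ### Theta functions of higher degree -/

lemma zpow_mul_eq_of_mul_eq {α : Type*} (hq : q ≠ 0) {u : ℂ → α}
    (hu : ∀ x ≠ 0, u (q * x) = u x) {x : ℂ} (hx : x ≠ 0) (n : ℤ) : u (q ^ n * x) = u x := by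
  have hstep (k : ℤ) : u (q ^ (k + 1) * x) = u (q ^ k * x) := by
    rw [zpow_add_one₀ hq, mul_comm _ q, mul_assoc]
    exact hu _ (mul_ne_zero (zpow_ne_zero k hq) hx)
  induction n with
  | zero => simp
  | succ k ih => exact (hstep k).trans ih
  | pred k ih => rw [← ih, ← hstep, sub_add_cancel]

/-- `f` is a theta function of degree `d` and multiplier `c` with respect to `x ↦ q * x`: it is
holomorphic on the punctured plane and `x ^ d * f (q * x) = c * f x` there. Equivalently, `f` is a
section of a line bundle of degree `d` on the elliptic curve `ℂˣ / q ^ ℤ`. -/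
structure IsThetaFunction (q : ℂ) (d : ℕ) (c : ℂ) (f : ℂ → ℂ) : Prop where
  differentiableOn : DifferentiableOn ℂ f {0}ᶜ
  map_mul : ∀ x ≠ 0, x ^ d * f (q * x) = c * f x

lemma isThetaFunction_jtheta (hq : q ≠ 0) (hq1 : ‖q‖ < 1) {a : ℂ} (ha : a ≠ 0) :
    IsThetaFunction q 1 (-(q * a)⁻¹) fun x ↦ jtheta (a * x) q where
  differentiableOn := (differentiableOn_jtheta hq hq1).comp
    (differentiableOn_id.const_mul a) fun _ hx ↦ mul_ne_zero ha hx
  map_mul x hx := by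
    have h := thetaCoeff_mul_zpow_mul_jtheta hq (mul_ne_zero ha hx) 1
    rw [← zero_add (1 : ℤ), thetaCoeff_add_one hq, thetaCoeff_zero, zero_add, zpow_one, zpow_one,
      show a * x * q = a * (q * x) by ring] at h
    rw [← h]
    field_simp

namespace IsThetaFunction

variable {d e : ℕ} {c c' : ℂ} {f g : ℂ → ℂ}

lemma mul (hf : IsThetaFunction q d c f) (hg : IsThetaFunction q e c' g) :
    IsThetaFunction q (d + e) (c * c') fun x ↦ f x * g x where
  differentiableOn := hf.differentiableOn.mul hg.differentiableOn
  map_mul x hx := by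
    linear_combination x ^ e * g (q * x) * hf.map_mul x hx + c * f x * hg.map_mul x hx

lemma sub (hf : IsThetaFunction q d c f) (hg : IsThetaFunction q d c g) :
    IsThetaFunction q d c fun x ↦ f x - g x where
  differentiableOn := hf.differentiableOn.sub hg.differentiableOn
  map_mul x hx := by linear_combination hf.map_mul x hx - hg.map_mul x hx

lemma const_mul (a : ℂ) (hf : IsThetaFunction q d c f) :
    IsThetaFunction q d c fun x ↦ a * f x where
  differentiableOn := hf.differentiableOn.const_mul a
  map_mul x hx := by linear_combination a * hf.map_mul x hx

lemma map_zpow_mul_eq_zero (hq : q ≠ 0) (hc : c ≠ 0) (hf : IsThetaFunction q d c f) {a : ℂ}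
    (ha : a ≠ 0) (hfa : f a = 0) (n : ℤ) : f (q ^ n * a) = 0 := by
  have hzero (x : ℂ) (hx : x ≠ 0) : (f (q * x) = 0) = (f x = 0) := by
    have h := hf.map_mul x hx
    refine propext ⟨fun h0 ↦ ?_, fun h0 ↦ ?_⟩ <;> simpa [h0, hc, hx] using h
  exact (zpow_mul_eq_of_mul_eq (u := fun x ↦ f x = 0) hq hzero ha n).mpr hfa

lemma of_jtheta_mul (hq : q ≠ 0) (hq1 : ‖q‖ < 1) {a : ℂ} (ha : a ≠ 0)
    (hg : DifferentiableOn ℂ g {0}ᶜ)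
    (hf : IsThetaFunction q (d + 1) c fun x ↦ jtheta (a⁻¹ * x) q * g x) :
    IsThetaFunction q d (-(c * q / a)) g := by
  have htheta := isThetaFunction_jtheta hq hq1 (inv_ne_zero ha)
  have hdefect : DifferentiableOn ℂ (fun x ↦ x ^ d * g (q * x) + c * q / a * g x) {0}ᶜ :=
    ((differentiableOn_id.pow d).mul (hg.comp (differentiableOn_id.const_mul q)
      fun _ hx ↦ mul_ne_zero hq hx)).add (hg.const_mul _)
  have hmul (x : ℂ) (hx : x ∈ ({0}ᶜ : Set ℂ)) :
      jtheta (a⁻¹ * x) q * (x ^ d * g (q * x) + c * q / a * g x) = 0 := by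
    have hqa : q * a⁻¹ * (q * a⁻¹)⁻¹ = 1 := mul_inv_cancel₀ (mul_ne_zero hq (inv_ne_zero ha))
    linear_combination x ^ d * g (q * x) * (q * a⁻¹) * htheta.map_mul x hx
      - q * a⁻¹ * hf.map_mul x hx - x ^ d * g (q * x) * jtheta (a⁻¹ * x) q * hqa
  have hne : jtheta (a⁻¹ * -a) q ≠ 0 := by
    rw [mul_neg, inv_mul_cancel₀ ha]
    exact jtheta_neg_one_ne_zero hq hq1
  have hzero := (AnalyticOnNhd.eq_zero_or_eq_zero_of_mul_eq_zero
    (htheta.differentiableOn.analyticOnNhd isOpen_compl_singleton)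
    (hdefect.analyticOnNhd isOpen_compl_singleton) hmul
    (isConnected_compl_singleton_of_one_lt_rank (by simp) 0).isPreconnected).resolve_left
    fun h ↦ hne (h _ (neg_ne_zero.mpr ha))
  exact ⟨hg, fun x hx ↦ by linear_combination hzero x hx⟩

theorem exists_eq_jtheta_mul (hq : q ≠ 0) (hq1 : ‖q‖ < 1) (hc : c ≠ 0)
    (hf : IsThetaFunction q (d + 1) c f) {a : ℂ} (ha : a ≠ 0) (hfa : f a = 0) :
    ∃ g, IsThetaFunction q d (-(c * q / a)) g ∧ ∀ x ≠ 0, f x = jtheta (a⁻¹ * x) q * g x := by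
  have hzero (p : ℂ) (hp : p ∈ ({0}ᶜ : Set ℂ)) (h : jtheta (a⁻¹ * p) q = 0) :
      f p = 0 ∧ deriv (fun x ↦ jtheta (a⁻¹ * x) q) p ≠ 0 := by
    have hp' : a⁻¹ * p ≠ 0 := mul_ne_zero (inv_ne_zero ha) hp
    constructor
    · obtain ⟨n, hn⟩ := (jtheta_eq_zero_iff hq hq1 hp').mp h
      rw [eq_comm, eq_inv_mul_iff_mul_eq₀ ha, mul_comm] at hn
      exact hn ▸ hf.map_zpow_mul_eq_zero hq hc ha hfa n
    · rw [deriv_comp_mul_left (f := fun x ↦ jtheta x q)]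
      exact smul_ne_zero (inv_ne_zero ha) (deriv_jtheta_ne_zero hq hq1 hp' h)
  obtain ⟨g, hg, hfg⟩ := exists_differentiableOn_eq_mul isOpen_compl_singleton
    hf.differentiableOn (isThetaFunction_jtheta hq hq1 (inv_ne_zero ha)).differentiableOn hzero
  refine ⟨g, of_jtheta_mul hq hq1 ha hg ⟨hf.differentiableOn.congr fun x hx ↦ (hfg x hx).symm,
    fun x hx ↦ ?_⟩, hfg⟩
  rw [← hfg x hx, ← hfg (q * x) (mul_ne_zero hq hx)]
  exact hf.map_mul x hx

end IsThetaFunction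

lemma exists_forall_le_of_map_mul_eq (hq : q ≠ 0) (hq1 : ‖q‖ < 1) {u : ℂ → ℝ}
    (hcont : ContinuousOn u {0}ᶜ) (hmul : ∀ x ≠ 0, u (q * x) = u x) : ∃ M, ∀ x ≠ 0, u x ≤ M := by
  have hq0 : 0 < ‖q‖ := norm_pos_iff.mpr hq
  let A : Set ℂ := Metric.closedBall 0 1 ∩ {x | ‖q‖ ≤ ‖x‖}
  have hA : IsCompact A :=
    (isCompact_closedBall 0 1).inter_right (isClosed_le continuous_const continuous_norm)
  have hA0 : A ⊆ {0}ᶜ := fun x hx ↦ norm_pos_iff.mp (hq0.trans_le hx.2)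
  obtain ⟨M, hM⟩ := hA.exists_bound_of_continuousOn (hcont.mono hA0)
  refine ⟨M, fun x hx ↦ ?_⟩
  obtain ⟨n, hn, hn'⟩ := exists_mem_Ioc_zpow (norm_pos_iff.mpr hx) ((one_lt_inv₀ hq0).mpr hq1)
  rw [← zpow_mul_eq_of_mul_eq hq hmul hx (n + 1)]
  refine (le_abs_self _).trans (hM _ ⟨?_, ?_⟩)
  · rw [mem_closedBall_zero_iff, norm_mul, norm_zpow, mul_comm]
    rwa [inv_zpow, ← one_div, le_div_iff₀ (zpow_pos hq0 _)] at hn'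
  · rw [inv_zpow, inv_lt_iff_one_lt_mul₀ (zpow_pos hq0 _)] at hn
    rw [Set.mem_ofPred_eq, norm_mul, norm_zpow, zpow_add_one₀ hq0.ne', mul_right_comm,
      mul_comm _ ‖x‖]
    exact le_mul_of_one_le_left hq0.le hn.le

namespace IsThetaFunction

variable {c : ℂ} {f : ℂ → ℂ}

lemma exists_norm_exp_mul_map_exp_le (hq : q ≠ 0) (hq1 : ‖q‖ < 1) (hc : c ≠ 0)
    (hf : IsThetaFunction q 0 c f) :
    ∃ (s : ℝ) (M : ℝ), ∀ w, ‖Complex.exp (-s * w) * f (Complex.exp w)‖ ≤ M := by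
  have hq0 : 0 < ‖q‖ := norm_pos_iff.mpr hq
  obtain ⟨s, hs⟩ : ∃ s : ℝ, ‖q‖ ^ s = ‖c‖ :=
    ⟨Real.logb ‖q‖ ‖c‖, Real.rpow_logb hq0 hq1.ne (norm_pos_iff.mpr hc)⟩
  have hcont : ContinuousOn (fun x ↦ ‖x‖ ^ (-s) * ‖f x‖) {0}ᶜ :=
    (continuous_norm.continuousOn.rpow_const fun x hx ↦ .inl (norm_ne_zero_iff.mpr hx)).mul
      hf.differentiableOn.continuousOn.norm
  have hperiod (x : ℂ) (hx : x ≠ 0) : ‖q * x‖ ^ (-s) * ‖f (q * x)‖ = ‖x‖ ^ (-s) * ‖f x‖ := by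
    have hfx := hf.map_mul x hx
    rw [pow_zero, one_mul] at hfx
    rw [hfx, norm_mul, norm_mul, Real.mul_rpow hq0.le (norm_nonneg x), Real.rpow_neg hq0.le, hs]
    field_simp [norm_ne_zero_iff.mpr hc]
  obtain ⟨M, hM⟩ := exists_forall_le_of_map_mul_eq hq hq1 hcont hperiod
  refine ⟨s, M, fun w ↦ (hM _ (Complex.exp_ne_zero w)).trans_eq' ?_⟩
  rw [norm_mul, Complex.norm_exp, Complex.norm_exp, ← Real.exp_mul]
  simp [mul_comm]

theorem eq_zero_of_degree_zero (hq : q ≠ 0) (hq1 : ‖q‖ < 1) (hc : c ≠ 0)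
    (hcq : ∀ n : ℤ, c ≠ q ^ n) (hf : IsThetaFunction q 0 c f) {x : ℂ} (hx : x ≠ 0) :
    f x = 0 := by
  obtain ⟨s, M, hM⟩ := hf.exists_norm_exp_mul_map_exp_le hq hq1 hc
  have hdiff : Differentiable ℂ fun w ↦ Complex.exp (-s * w) * f (Complex.exp w) :=
    (Complex.differentiable_exp.comp (differentiable_id.const_mul _)).mul fun w ↦
      ((hf.differentiableOn.differentiableAt (isOpen_compl_singleton.mem_nhds
        (Complex.exp_ne_zero w))).comp w Complex.differentiable_exp.differentiableAt)
  have hconst (w : ℂ) : f (Complex.exp w) = Complex.exp (s * w) * f 1 := by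
    have h := hdiff.apply_eq_apply_of_bounded
      (isBounded_iff_forall_norm_le.mpr ⟨M, Set.forall_mem_range.mpr hM⟩) w 0
    rw [mul_zero, Complex.exp_zero, one_mul, neg_mul, Complex.exp_neg] at h
    field_simp at h
    exact h
  have hone : f 1 = 0 := by
    by_contra hone
    have hperiod := hconst (2 * Real.pi * Complex.I)
    rw [Complex.exp_two_pi_mul_I, eq_comm, mul_eq_right₀ hone, Complex.exp_eq_one_iff] at hperiod
    obtain ⟨n, hn⟩ := hperiod
    have hsn : (s : ℂ) = n := mul_right_cancel₀ Complex.two_pi_I_ne_zero hn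
    have hfq := hconst (Complex.log q)
    rw [Complex.exp_log hq, hsn, Complex.exp_int_mul, Complex.exp_log hq] at hfq
    have hmul := hf.map_mul 1 one_ne_zero
    rw [pow_zero, one_mul, mul_one, hfq] at hmul
    exact hcq n (mul_right_cancel₀ hone hmul).symm
  rw [← Complex.exp_log hx, hconst, hone, mul_zero]

theorem eq_zero_of_degree_two (hq : q ≠ 0) (hq1 : ‖q‖ < 1) (hc0 : c ≠ 0)
    (hf : IsThetaFunction q 2 c f) {a b : ℂ} (ha : a ≠ 0) (hb : b ≠ 0) (hfa : f a = 0)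
    (hfb : f b = 0) (hab : ∀ n : ℤ, a⁻¹ * b ≠ q ^ n) (hc : ∀ n : ℤ, c * q ^ 2 / (a * b) ≠ q ^ n)
    {x : ℂ} (hx : x ≠ 0) : f x = 0 := by
  obtain ⟨g, hg, hfg⟩ := hf.exists_eq_jtheta_mul hq hq1 hc0 ha hfa
  have hgb : g b = 0 := by
    have htheta := jtheta_ne_zero hq hq1 (mul_ne_zero (inv_ne_zero ha) hb) hab
    exact (mul_eq_zero.mp ((hfg b hb).symm.trans hfb)).resolve_left htheta
  have hcg : -(c * q / a) ≠ 0 := neg_ne_zero.mpr (div_ne_zero (mul_ne_zero hc0 hq) ha)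
  obtain ⟨h, hh, hgh⟩ := hg.exists_eq_jtheta_mul hq hq1 hcg hb hgb
  have hch : -(-(c * q / a) * q / b) = c * q ^ 2 / (a * b) := by field_simp
  rw [hch] at hh
  have hcq : c * q ^ 2 / (a * b) ≠ 0 := by positivity
  rw [hfg x hx, hgh x hx, hh.eq_zero_of_degree_zero hq hq1 hcq hc hx, mul_zero, mul_zero]

end IsThetaFunction

/-! ### The numerator of the Appell-Lerch sum -/

/-- The holomorphic extension to `{0}ᶜ` of `x ↦ θ(x;q) θ(xt;q) AL(t,x,q)`: multiplying the terms of
`AL` by `θ(xt;q)` removes their poles. -/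
noncomputable def appellNumerator (t q x : ℂ) : ℂ :=
  ∑' k : ℤ, thetaCoeff q k * x ^ k * jthetaQuotient q k (x * t)

lemma jtheta_mul_jtheta_mul_AL (hq : q ≠ 0) (hq1 : ‖q‖ < 1) {t x : ℂ} (ht : t ≠ 0) (hx : x ≠ 0)
    (hxq : ∀ n : ℤ, x ≠ q ^ n) (hxtq : ∀ n : ℤ, x * t ≠ q ^ n) :
    jtheta x q * jtheta (x * t) q * AL t x q = appellNumerator t q x := by
  have hxt : x * t ≠ 0 := mul_ne_zero hx ht
  have hthetax := jtheta_ne_zero hq hq1 hx hxq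
  have hterm (k : ℤ) : jtheta (x * t) q * (thetaCoeff q k * x ^ k / (1 - x * t * q ^ k)) =
      thetaCoeff q k * x ^ k * jthetaQuotient q k (x * t) := by
    have hsplit := one_sub_mul_jthetaQuotient hq hq1 hxt k
    have hpole := left_ne_zero_of_mul (hsplit ▸ jtheta_ne_zero hq hq1 hxt hxtq)
    rw [← hsplit]
    field_simp
  rw [AL_eq_inv_mul_tsum, mul_right_comm, mul_inv_cancel_left₀ hthetax, mul_comm, ← tsum_mul_left]
  exact tsum_congr hterm

lemma appellNumerator_inv (hq : q ≠ 0) (hq1 : ‖q‖ < 1) {t : ℂ} (ht : t ≠ 0) :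
    appellNumerator t q t⁻¹ = -qPochInf q q ^ 3 := by
  rw [appellNumerator, inv_mul_cancel₀ ht, tsum_eq_single 0 fun k hk ↦ by
    rw [jthetaQuotient_one_of_ne_zero hq hq1 hk, mul_zero]]
  simp [thetaCoeff_zero, jthetaQuotient_zero_one]

lemma appellNumerator_map_mul (hq : q ≠ 0) {t x : ℂ} (ht : t ≠ 0) (hx : x ≠ 0) :
    x ^ 2 * appellNumerator t q (q * x) = (q ^ 2 * t)⁻¹ * appellNumerator t q x := by
  rw [eq_inv_mul_iff_mul_eq₀ (by positivity), appellNumerator, appellNumerator,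
    ← (Equiv.addRight (1 : ℤ)).tsum_eq fun k ↦ thetaCoeff q k * x ^ k * jthetaQuotient q k (x * t),
    ← tsum_mul_left, ← tsum_mul_left]
  refine tsum_congr fun k ↦ ?_
  rw [Equiv.coe_addRight, thetaCoeff_add_one hq, jthetaQuotient_succ_eq hq (mul_ne_zero hx ht),
    zpow_add_one₀ hx, zpow_add_one₀ hq, mul_zpow, mul_assoc q x t]
  ring

lemma eventually_zpow_le {b ε : ℝ} (hb : 0 < b) (hb1 : b < 1) (hε : 0 < ε) :
    ∀ᶠ k : ℤ in atTop, b ^ k ≤ ε := by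
  obtain ⟨n, hn⟩ := exists_pow_lt_of_lt_one hε hb1
  filter_upwards [eventually_ge_atTop (n : ℤ)] with k hk
  exact (zpow_le_zpow_right_of_le_one₀ hb hb1.le hk).trans (zpow_natCast b n ▸ hn.le)

lemma eventually_half_le_norm_one_sub_mul_zpow (hq : q ≠ 0) (hq1 : ‖q‖ < 1) {r R : ℝ}
    (hr : 0 < r) (hR : 0 < R) :
    ∀ᶠ k : ℤ in cofinite, ∀ y : ℂ, r ≤ ‖y‖ → ‖y‖ ≤ R → 1 / 2 ≤ ‖1 - y * q ^ k‖ := by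
  have hq0 : 0 < ‖q‖ := norm_pos_iff.mpr hq
  rw [Int.cofinite_eq, eventually_sup]
  constructor
  · filter_upwards [tendsto_neg_atBot_atTop.eventually
      (eventually_zpow_le hq0 hq1 (show 0 < r / 2 by positivity))] with k hk y hy _
    have hlarge : 2 ≤ r * ‖q‖ ^ k := by
      rw [zpow_neg, inv_le_comm₀ (zpow_pos hq0 k) (by positivity), inv_div, div_le_iff₀ hr] at hk
      rwa [mul_comm]
    have hnorm := norm_sub_norm_le (y * q ^ k) 1
    rw [norm_sub_rev, norm_mul, norm_zpow, norm_one] at hnorm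
    linarith [mul_le_mul_of_nonneg_right hy (zpow_nonneg hq0.le k)]
  · filter_upwards [eventually_zpow_le hq0 hq1 (show 0 < 1 / (2 * R) by positivity)]
      with k hk y _ hy
    have hsmall : R * ‖q‖ ^ k ≤ 1 / 2 := by
      rw [le_div_iff₀ (by positivity)] at hk
      linarith
    have hnorm := norm_sub_norm_le 1 (y * q ^ k)
    rw [norm_mul, norm_zpow, norm_one] at hnorm
    linarith [mul_le_mul_of_nonneg_right hy (zpow_nonneg hq0.le k)]

lemma exists_summable_norm_thetaCoeff_mul_zpow_le (hq : q ≠ 0) (hq1 : ‖q‖ < 1) {r R : ℝ}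
    (hr : 0 < r) (hR : 0 < R) :
    ∃ u : ℤ → ℝ, Summable u ∧
      ∀ k, ∀ x : ℂ, r ≤ ‖x‖ → ‖x‖ ≤ R → ‖thetaCoeff q k * x ^ k‖ ≤ u k := by
  have hsummable {ρ : ℝ} (hρ : 0 < ρ) : Summable fun k : ℤ ↦ ‖thetaCoeff q k‖ * ρ ^ k := by
    simpa [abs_of_pos hρ] using
      (summable_thetaCoeff_mul_zpow hq hq1 (Complex.ofReal_ne_zero.mpr hρ.ne')).norm
  refine ⟨_, (hsummable hr).add (hsummable hR), fun k x hrx hxR ↦ ?_⟩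
  rw [norm_mul, norm_zpow, ← mul_add]
  gcongr
  rcases le_total 0 k with hk | hk
  · exact (zpow_le_zpow_left₀ hk (norm_nonneg x) hxR).trans
      (le_add_of_nonneg_left (zpow_nonneg hr.le k))
  · have hinv := zpow_le_zpow_left₀ (neg_nonneg.mpr hk) hr.le hrx
    rw [zpow_neg, zpow_neg] at hinv
    exact ((inv_le_inv₀ (zpow_pos hr k) (zpow_pos (hr.trans_le hrx) k)).mp hinv).trans
      (le_add_of_nonneg_right (zpow_nonneg hR.le k))

lemma exists_forall_norm_mem_Icc {K : Set ℂ} (hK : IsCompact K) (hK0 : K ⊆ {0}ᶜ) :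
    ∃ r R : ℝ, 0 < r ∧ 0 < R ∧ ∀ x ∈ K, ‖x‖ ∈ Set.Icc r R := by
  obtain ⟨R, hR, hKR⟩ := hK.isBounded.exists_pos_norm_le
  obtain ⟨C, hC⟩ := hK.exists_bound_of_continuousOn (continuousOn_inv₀.mono hK0)
  refine ⟨(max C 1)⁻¹, R, by positivity, hR, fun x hx ↦ ⟨?_, hKR x hx⟩⟩
  rw [inv_le_comm₀ (by positivity) (norm_pos_iff.mpr (hK0 hx)), ← norm_inv]
  exact (hC x hx).trans (le_max_left C 1)

lemma differentiableOn_appellNumerator (hq : q ≠ 0) (hq1 : ‖q‖ < 1) {t : ℂ} (ht : t ≠ 0) :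
    DifferentiableOn ℂ (appellNumerator t q) {0}ᶜ := by
  have hmaps : Set.MapsTo (fun x ↦ x * t) ({0}ᶜ : Set ℂ) {0}ᶜ := fun x hx ↦ mul_ne_zero hx ht
  refine SummableLocallyUniformlyOn.differentiableOn isOpen_compl_singleton
    (SummableLocallyUniformlyOn.of_locally_bounded_eventually isOpen_compl_singleton
      fun K hK0 hK ↦ ?_) fun k x hx ↦ ?_
  · obtain ⟨r, R, hr, hR, hKr⟩ := exists_forall_norm_mem_Icc hK hK0
    obtain ⟨u, hu, hKu⟩ := exists_summable_norm_thetaCoeff_mul_zpow_le hq hq1 hr hR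
    obtain ⟨B, hB⟩ := hK.exists_bound_of_continuousOn
      (((differentiableOn_jtheta hq hq1).continuousOn.comp (by fun_prop) hmaps).mono hK0)
    refine ⟨fun k ↦ u k * (2 * B), hu.mul_right _, ?_⟩
    have ht0 : 0 < ‖t‖ := norm_pos_iff.mpr ht
    filter_upwards [eventually_half_le_norm_one_sub_mul_zpow hq hq1 (mul_pos hr ht0)
      (mul_pos hR ht0)] with k hk x hx
    obtain ⟨hrx, hxR⟩ := hKr x hx
    have hhalf : 1 / 2 ≤ ‖1 - x * t * q ^ k‖ := by
      refine hk (x * t) ?_ ?_ <;> rw [norm_mul] <;> gcongr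
    have hquotient : ‖jthetaQuotient q k (x * t)‖ ≤ 2 * B := by
      have hmul : ‖(1 - x * t * q ^ k) * jthetaQuotient q k (x * t)‖ = ‖jtheta (x * t) q‖ :=
        congrArg norm (one_sub_mul_jthetaQuotient hq hq1 (hmaps (hK0 hx)) k)
      rw [norm_mul] at hmul
      have hBx : ‖jtheta (x * t) q‖ ≤ B := hB x hx
      linarith [mul_le_mul_of_nonneg_right hhalf
        (norm_nonneg (jthetaQuotient q k (x * t)))]
    rw [norm_mul]
    exact mul_le_mul (hKu k x hrx hxR) hquotient (norm_nonneg _)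
      ((norm_nonneg _).trans (hKu k x hrx hxR))
  · have hquotient := (differentiableOn_jthetaQuotient hq hq1 k).differentiableAt
      (isOpen_compl_singleton.mem_nhds (hmaps hx))
    exact ((differentiableAt_zpow.mpr (.inl hx)).const_mul _).mul
      (hquotient.comp x (differentiableAt_id.mul_const t))

lemma isThetaFunction_appellNumerator (hq : q ≠ 0) (hq1 : ‖q‖ < 1) {t : ℂ} (ht : t ≠ 0) :
    IsThetaFunction q 2 (q ^ 2 * t)⁻¹ (appellNumerator t q) :=
  ⟨differentiableOn_appellNumerator hq hq1 ht, fun _ ↦ appellNumerator_map_mul hq ht⟩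

theorem mul_appellNumerator_sub_mul_appellNumerator (hq : q ≠ 0) (hq1 : ‖q‖ < 1) {t x y : ℂ}
    (ht : t ≠ 0) (hx : x ≠ 0) (hy : y ≠ 0) (hyq : ∀ n : ℤ, y ≠ q ^ n)
    (hytq : ∀ n : ℤ, y * t ≠ q ^ n) :
    y * t * (jtheta y q * jtheta (y * t) q * appellNumerator t q x -
        jtheta x q * jtheta (x * t) q * appellNumerator t q y) =
      qPochInf q q ^ 3 * (jtheta (y⁻¹ * x) q * jtheta (y * t * x) q) := by
  have hyt : y * t ≠ 0 := mul_ne_zero hy ht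
  have htheta {a b : ℂ} (ha : a ≠ 0) (hb : b ≠ 0) (hab : a * b = t) :
      IsThetaFunction q 2 (q ^ 2 * t)⁻¹ fun x ↦ jtheta (a * x) q * jtheta (b * x) q := by
    convert (isThetaFunction_jtheta hq hq1 ha).mul (isThetaFunction_jtheta hq hq1 hb) using 1
    rw [← hab]
    field_simp
  have hf := ((((isThetaFunction_appellNumerator hq hq1 ht).const_mul
      (jtheta y q * jtheta (y * t) q)).sub
    ((htheta one_ne_zero ht (one_mul t)).const_mul (appellNumerator t q y))).const_mul (y * t)).sub
    ((htheta (inv_ne_zero hy) hyt (inv_mul_cancel_left₀ hy t)).const_mul (qPochInf q q ^ 3))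
  have hzero := hf.eq_zero_of_degree_two hq hq1 (by positivity) hy (inv_ne_zero ht) ?_ ?_ ?_ ?_ hx
  · rw [one_mul, mul_comm t] at hzero
    linear_combination hzero
  · rw [inv_mul_cancel₀ hy, jtheta_one, one_mul, mul_comm t]
    ring
  · rw [appellNumerator_inv hq hq1 ht, ← mul_inv, jtheta_inv hyt, mul_inv_cancel_right₀ ht,
      mul_inv_cancel₀ ht, jtheta_one]
    ring
  · intro n hn
    refine hytq (-n) ?_
    rw [zpow_neg, ← hn, ← mul_inv, inv_inv]
  · intro n hn
    refine hyq (-n) ?_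
    rw [zpow_neg, ← hn]
    field_simp

/-- The difference of two Appell-Lerch sums with different Laplace parameters is
an explicit ratio of theta functions. -/
theorem appell_lerch_difference
    (q : ℂ) (hq0 : 0 < ‖q‖) (hq1 : ‖q‖ < 1)
    (t lam mu : ℂ) (ht : t ≠ 0) (hlam : lam ≠ 0) (hmu : mu ≠ 0)
    (hlamq : ∀ n : ℤ, lam ≠ q ^ n) (hmuq : ∀ n : ℤ, mu ≠ q ^ n)
    (hlamt : ∀ n : ℤ, lam * t ≠ q ^ n) (hmut : ∀ n : ℤ, mu * t ≠ q ^ n) :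
    AL t lam q - AL t mu q =
      -((qPochInf q q) ^ 3 * jtheta (lam⁻¹ * mu) q * jtheta (lam⁻¹ * mu⁻¹ * t⁻¹) q) /
        (jtheta lam⁻¹ q * jtheta mu q * jtheta (lam⁻¹ * t⁻¹) q *
          jtheta (mu⁻¹ * t⁻¹) q) := by
  have hq : q ≠ 0 := norm_pos_iff.mp hq0
  have hlamt0 : lam * t ≠ 0 := mul_ne_zero hlam ht
  have hmut0 : mu * t ≠ 0 := mul_ne_zero hmu ht
  have hAL_lam := jtheta_mul_jtheta_mul_AL hq hq1 ht hlam hlamq hlamt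
  have hAL_mu := jtheta_mul_jtheta_mul_AL hq hq1 ht hmu hmuq hmut
  have hrelation := mul_appellNumerator_sub_mul_appellNumerator hq hq1 ht hmu hlam hlamq hlamt
  rw [show lam⁻¹ * mu⁻¹ * t⁻¹ = (lam * t * mu)⁻¹ by field_simp, ← mul_inv lam, ← mul_inv mu,
    jtheta_inv hlam, jtheta_inv hlamt0, jtheta_inv hmut0, jtheta_inv (mul_ne_zero hlamt0 hmu),
    eq_div_iff (by simp [hlam, hmu, ht, jtheta_ne_zero hq hq1, hlamq, hmuq, hlamt, hmut])]
  rw [← hAL_lam, ← hAL_mu] at hrelation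
  linear_combination lam * t * mu * hrelation
end

section
/- Let q ∈ ℂ with 0 < |q| < 1, let λ ∈ ℂ∖{0} with λ ∉ q^ℤ, and let m ∈ ℤ. Set t₀ = q^{−m} λ^{−1}. Then the function t ↦ (t − t₀) · AL(t,λ,q) / t tends to −1/θ(q^m λ; q) as t → t₀ with t ∉ λ^{−1} q^ℤ; equivalently, AL(t,λ,q) has a simple pole at t = t₀ with residue of AL(t,λ,q) dt/(2πit) equal to −1/θ(q^m λ; q). -/
open Finset Filter

/-!
Put `u = λ t q^m`. Multiplied by `1 - u`, the series defining `AL(t,λ,q)` has the terms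
`a_k (1 - u) / (1 - u q^(k-m))`, where `a_k` is the `k`-th term of `θ(λ;q)`. As `u → 1`, these tend
to `0` except for `k = m`, and near `u = 1` they are dominated by `|a_k|`, because none of the
`1 - u q^j` is smaller than `1 - u`. Hence `(1 - u) AL(t,λ,q) → a_m / θ(λ;q)`, which is
`1 / θ(q^m λ;q)` by the quasi-periodicity of `θ`.
-/

open scoped Topology

section ThetaTerm

/-- The `k`-th term `(−1)^k q^{k(k+1)/2} t^k` of the Jacobi theta series `jtheta t q`; at `t = λ` it
is also the numerator of the `k`-th term of the Appell-Lerch sum `AL`. -/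
def thetaTerm {K : Type*} [Field K] (t q : K) (k : ℤ) : K :=
  (-1) ^ k * q ^ (k * (k + 1) / 2) * t ^ k

variable {K : Type*} [Field K] {t q : K}

lemma triangular_add (k m : ℤ) :
    (k + m) * (k + m + 1) / 2 = k * (k + 1) / 2 + m * (m + 1) / 2 + m * k := by
  have h : (k + m) * (k + m + 1) = (k * (k + 1) + m * (m + 1)) + (m * k) * 2 := by ring
  rw [h, Int.add_mul_ediv_right _ _ two_ne_zero,
    Int.add_ediv_of_dvd_left (Int.even_mul_succ_self k).two_dvd]

lemma thetaTerm_ne_zero (hq : q ≠ 0) (ht : t ≠ 0) (k : ℤ) : thetaTerm t q k ≠ 0 :=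
  mul_ne_zero (mul_ne_zero (zpow_ne_zero _ (neg_ne_zero.2 one_ne_zero)) (zpow_ne_zero _ hq))
    (zpow_ne_zero _ ht)

lemma thetaTerm_one (t q : K) : thetaTerm t q 1 = -(q * t) := by
  simp [thetaTerm]

lemma thetaTerm_add (hq : q ≠ 0) (ht : t ≠ 0) (k m : ℤ) :
    thetaTerm t q (k + m) = thetaTerm t q m * thetaTerm (q ^ m * t) q k := by
  simp only [thetaTerm]
  rw [triangular_add, zpow_add₀ hq, zpow_add₀ hq, zpow_add₀ (neg_ne_zero.2 one_ne_zero),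
    zpow_add₀ ht, mul_zpow, zpow_mul]
  ring

lemma thetaTerm_succ (hq : q ≠ 0) (ht : t ≠ 0) (k : ℤ) :
    thetaTerm t q (k + 1) = -(q ^ (k + 1) * t) * thetaTerm t q k := by
  rw [add_comm, thetaTerm_add hq ht, thetaTerm_one, zpow_one_add₀ hq]
  ring

lemma thetaTerm_neg_succ (ht : t ≠ 0) (k : ℤ) :
    thetaTerm t q (-(k + 1)) = -t⁻¹ * thetaTerm t⁻¹ q k := by
  have h : -(k + 1) * (-(k + 1) + 1) = k * (k + 1) := by ring
  have hsign : (-1 : K) ^ (-(k + 1)) = -(-1) ^ k := by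
    rw [zpow_neg, ← inv_zpow, inv_neg_one, zpow_add_one₀ (neg_ne_zero.2 one_ne_zero), mul_neg_one]
  rw [thetaTerm, h, hsign, zpow_neg, ← inv_zpow, zpow_add_one₀ (inv_ne_zero ht), thetaTerm]
  ring

end ThetaTerm

section NormedField

variable {𝕜 : Type*} [NormedField 𝕜] {q : 𝕜}

lemma summable_norm_thetaTerm_natCast {t : 𝕜} (hq : q ≠ 0) (hq1 : ‖q‖ < 1) (ht : t ≠ 0) :
    Summable fun n : ℕ ↦ ‖thetaTerm t q n‖ := by
  have hratio (n : ℕ) :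
      ‖thetaTerm t q ↑(n + 1)‖ = ‖q‖ ^ (n + 1) * ‖t‖ * ‖thetaTerm t q n‖ := by
    rw [Nat.cast_succ, thetaTerm_succ hq ht, ← Nat.cast_succ, zpow_natCast, norm_mul, norm_neg,
      norm_mul, norm_pow]
  have hlim : Tendsto (fun n ↦ ‖q‖ ^ (n + 1) * ‖t‖) atTop (𝓝 0) := by
    simpa using ((tendsto_pow_atTop_nhds_zero_of_lt_one (norm_nonneg q) hq1).comp
      (tendsto_add_atTop_nat 1)).mul_const ‖t‖
  refine summable_of_ratio_norm_eventually_le (r := 1 / 2) one_half_lt_one ?_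
  filter_upwards [hlim.eventually_le_const one_half_pos] with n hn
  rw [norm_norm, norm_norm, hratio]
  gcongr

lemma summable_norm_thetaTerm {t : 𝕜} (hq : q ≠ 0) (hq1 : ‖q‖ < 1) (ht : t ≠ 0) :
    Summable fun k : ℤ ↦ ‖thetaTerm t q k‖ := by
  refine .of_nat_of_neg_add_one (summable_norm_thetaTerm_natCast hq hq1 ht) ?_
  simpa only [thetaTerm_neg_succ ht, norm_mul] using
    (summable_norm_thetaTerm_natCast hq hq1 (inv_ne_zero ht)).mul_left ‖-t⁻¹‖

lemma zpow_injective_of_norm_lt_one (hq : q ≠ 0) (hq1 : ‖q‖ < 1) :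
    Function.Injective fun k : ℤ ↦ q ^ k := fun k l h ↦
  zpow_right_injective₀ (norm_pos_iff.2 hq) hq1.ne <| by
    simpa only [norm_zpow] using congrArg norm h

lemma norm_one_sub_le_norm_one_sub_mul_zpow {u : 𝕜} (hq : q ≠ 0)
    (hu : ‖1 - u‖ * (1 + ‖q‖) ≤ 1 - ‖q‖) (j : ℤ) : ‖1 - u‖ ≤ ‖1 - u * q ^ j‖ := by
  have hq0 : 0 < ‖q‖ := norm_pos_iff.2 hq
  have hq1 : ‖q‖ ≤ 1 := sub_nonneg.1 (le_trans (by positivity) hu)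
  rcases lt_trichotomy j 0 with hj | rfl | hj
  · have hpow : ‖q‖⁻¹ ≤ ‖q‖ ^ j := by
      simpa using zpow_le_zpow_right_of_le_one₀ hq0 hq1 (show j ≤ -1 by lia)
    have hu_ge : 1 - ‖1 - u‖ ≤ ‖u‖ := by
      simpa [add_comm] using norm_sub_norm_le (1 : 𝕜) u
    calc ‖1 - u‖ ≤ (1 - ‖1 - u‖) * ‖q‖⁻¹ - 1 := by
          rw [le_sub_iff_add_le, ← div_eq_mul_inv, le_div_iff₀ hq0]
          linarith
      _ ≤ ‖u‖ * ‖q‖ ^ j - 1 := by gcongr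
      _ = ‖u * q ^ j‖ - ‖(1 : 𝕜)‖ := by rw [norm_mul, norm_zpow, norm_one]
      _ ≤ ‖1 - u * q ^ j‖ := by
          rw [norm_sub_rev]
          exact norm_sub_norm_le _ _
  · simp
  · have hpow : ‖q‖ ^ j ≤ ‖q‖ := by
      simpa using zpow_le_zpow_right_of_le_one₀ hq0 hq1 (show 1 ≤ j by lia)
    have hu_le : ‖u‖ ≤ 1 + ‖1 - u‖ := by
      simpa using norm_le_norm_add_norm_sub (1 : 𝕜) u
    calc ‖1 - u‖ ≤ 1 - (1 + ‖1 - u‖) * ‖q‖ := by linarith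
      _ ≤ 1 - ‖u‖ * ‖q‖ ^ j := by gcongr
      _ = ‖(1 : 𝕜)‖ - ‖u * q ^ j‖ := by rw [norm_mul, norm_zpow, norm_one]
      _ ≤ ‖1 - u * q ^ j‖ := norm_sub_norm_le _ _

lemma eventually_norm_one_sub_mul_zpow_le (hq : q ≠ 0) (hq1 : ‖q‖ < 1) (m : ℤ) :
    ∀ᶠ z in 𝓝 (q ^ (-m)), ∀ k : ℤ, ‖1 - z * q ^ m‖ ≤ ‖1 - z * q ^ k‖ := by
  have hcont : Continuous fun z : 𝕜 ↦ ‖1 - z * q ^ m‖ * (1 + ‖q‖) := by fun_prop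
  have hlim : Tendsto (fun z : 𝕜 ↦ ‖1 - z * q ^ m‖ * (1 + ‖q‖)) (𝓝 (q ^ (-m))) (𝓝 0) := by
    simpa [zpow_ne_zero m hq] using hcont.tendsto (q ^ (-m))
  filter_upwards [hlim.eventually_le_const (sub_pos.2 hq1)] with z hz k
  have h := norm_one_sub_le_norm_one_sub_mul_zpow hq hz (k - m)
  rwa [mul_assoc, ← zpow_add₀ hq, add_sub_cancel] at h

lemma tendsto_one_sub_mul_zpow_mul_div (hq : q ≠ 0) (hq1 : ‖q‖ < 1) (a : ℤ → 𝕜) (m k : ℤ) :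
    Tendsto (fun z ↦ (1 - z * q ^ m) * (a k / (1 - z * q ^ k))) (𝓝[≠] (q ^ (-m)))
      (𝓝 (if k = m then a k else 0)) := by
  have hqm : q ^ (-m) * q ^ m = 1 := by rw [← zpow_add₀ hq, neg_add_cancel, zpow_zero]
  rcases eq_or_ne k m with rfl | hk
  · rw [if_pos rfl]
    refine tendsto_const_nhds.congr' ?_
    filter_upwards [self_mem_nhdsWithin] with z hz
    have hden : 1 - z * q ^ k ≠ 0 := fun h ↦
      hz (mul_right_cancel₀ (zpow_ne_zero k hq) ((sub_eq_zero.1 h).symm.trans hqm.symm))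
    rw [mul_div_cancel₀ _ hden]
  · rw [if_neg hk]
    have hden : 1 - q ^ (-m) * q ^ k ≠ 0 := fun h ↦ hk <|
      zpow_injective_of_norm_lt_one hq hq1 <|
        mul_left_cancel₀ (zpow_ne_zero (-m) hq) ((sub_eq_zero.1 h).symm.trans hqm.symm)
    have hcont : ContinuousAt (fun z ↦ (1 - z * q ^ m) * (a k / (1 - z * q ^ k))) (q ^ (-m)) := by
      fun_prop (disch := exact hden)
    simpa only [hqm, sub_self, zero_mul] using hcont.tendsto.mono_left nhdsWithin_le_nhds

theorem tendsto_one_sub_mul_zpow_mul_tsum_div [CompleteSpace 𝕜] (hq : q ≠ 0) (hq1 : ‖q‖ < 1)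
    {a : ℤ → 𝕜} (ha : Summable fun k ↦ ‖a k‖) (m : ℤ) :
    Tendsto (fun z ↦ (1 - z * q ^ m) * ∑' k : ℤ, a k / (1 - z * q ^ k)) (𝓝[≠] (q ^ (-m)))
      (𝓝 (a m)) := by
  simp_rw [← tsum_mul_left]
  rw [← tsum_ite_eq m a]
  refine tendsto_tsum_of_dominated_convergence ha
    (tendsto_one_sub_mul_zpow_mul_div hq hq1 a m) ?_
  filter_upwards [nhdsWithin_le_nhds (eventually_norm_one_sub_mul_zpow_le hq hq1 m)] with z hz k
  calc ‖(1 - z * q ^ m) * (a k / (1 - z * q ^ k))‖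
      = ‖a k‖ * (‖1 - z * q ^ m‖ / ‖1 - z * q ^ k‖) := by
        rw [norm_mul, norm_div, mul_div_left_comm]
    _ ≤ ‖a k‖ := mul_le_of_le_one_right (norm_nonneg _) (div_le_one_of_le₀ (hz k) (norm_nonneg _))

end NormedField

variable {q lam : ℂ}

lemma jtheta_eq_thetaTerm_mul (hq : q ≠ 0) (hlam : lam ≠ 0) (m : ℤ) :
    jtheta lam q = thetaTerm lam q m * jtheta (q ^ m * lam) q := by
  calc jtheta lam q = ∑' k : ℤ, thetaTerm lam q (k + m) :=
        ((Equiv.addRight m).tsum_eq (thetaTerm lam q)).symm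
    _ = ∑' k : ℤ, thetaTerm lam q m * thetaTerm (q ^ m * lam) q k :=
        tsum_congr fun k ↦ thetaTerm_add hq hlam k m
    _ = thetaTerm lam q m * jtheta (q ^ m * lam) q := tsum_mul_left

lemma tendsto_one_sub_mul_AL (hq : q ≠ 0) (hq1 : ‖q‖ < 1) (hlam : lam ≠ 0) (m : ℤ) :
    Tendsto (fun t ↦ (1 - lam * t * q ^ m) * AL t lam q) (𝓝[≠] (q ^ (-m) * lam⁻¹))
      (𝓝 (jtheta (q ^ m * lam) q)⁻¹) := by
  have hscale : Tendsto (lam * ·) (𝓝[≠] (q ^ (-m) * lam⁻¹)) (𝓝[≠] (q ^ (-m))) := by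
    have h : Tendsto (lam * ·) (𝓝[≠] (q ^ (-m) * lam⁻¹)) (𝓝[≠] (lam * (q ^ (-m) * lam⁻¹))) :=
      ((Homeomorph.mulLeft₀ lam hlam).map_punctured_nhds_eq _).le
    rwa [mul_left_comm, mul_inv_cancel₀ hlam, mul_one] at h
  have hseries := (tendsto_one_sub_mul_zpow_mul_tsum_div hq hq1
    (summable_norm_thetaTerm hq hq1 hlam) m).comp hscale
  have hlimit : (jtheta lam q)⁻¹ * thetaTerm lam q m = (jtheta (q ^ m * lam) q)⁻¹ := by
    rw [jtheta_eq_thetaTerm_mul hq hlam m, mul_inv_rev,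
      inv_mul_cancel_right₀ (thetaTerm_ne_zero hq hlam m)]
  rw [← hlimit]
  exact (hseries.const_mul (jtheta lam q)⁻¹).congr fun t ↦ mul_left_comm _ _ _

/-- The Appell-Lerch sum has a simple pole at `t = q^{−m} λ^{−1}` with residue
(of `AL(t,λ,q) dt/(2πit)`) equal to `−1/θ(q^m λ; q)`. -/
theorem appell_lerch_residue
    (q : ℂ) (hq0 : 0 < ‖q‖) (hq1 : ‖q‖ < 1)
    (lam : ℂ) (hlam : lam ≠ 0) (hlamq : ∀ n : ℤ, lam ≠ q ^ n) (m : ℤ) :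
    Tendsto (fun t : ℂ => (t - q ^ (-m) * lam⁻¹) * AL t lam q / t)
      (nhdsWithin (q ^ (-m) * lam⁻¹) {t : ℂ | ∀ n : ℤ, t ≠ lam⁻¹ * q ^ n})
      (nhds (-(jtheta (q ^ m * lam) q)⁻¹)) := by
  have hq : q ≠ 0 := norm_pos_iff.1 hq0
  set t₀ : ℂ := q ^ (-m) * lam⁻¹ with ht₀_def
  have ht₀ : t₀ ≠ 0 := mul_ne_zero (zpow_ne_zero _ hq) (inv_ne_zero hlam)
  have hpole : lam * t₀ * q ^ m = 1 := by
    rw [ht₀_def, zpow_neg]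
    field_simp
  have hpunctured : 𝓝[{t : ℂ | ∀ n : ℤ, t ≠ lam⁻¹ * q ^ n}] t₀ ≤ 𝓝[≠] t₀ :=
    nhdsWithin_mono _ fun t ht h ↦ ht (-m) (h.trans (mul_comm _ _))
  have hfactor : Tendsto (fun t ↦ -(lam * t * q ^ m)⁻¹) (𝓝[≠] t₀) (𝓝 (-1)) := by
    have hcont : ContinuousAt (fun t ↦ -(lam * t * q ^ m)⁻¹) t₀ := by
      fun_prop (disch := simp [hpole])
    simpa only [hpole, inv_one] using hcont.tendsto.mono_left nhdsWithin_le_nhds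
  have hlim := hfactor.mul (tendsto_one_sub_mul_AL hq hq1 hlam m)
  rw [neg_one_mul] at hlim
  refine (hlim.congr' ?_).mono_left hpunctured
  filter_upwards [nhdsWithin_le_nhds (isOpen_ne.mem_nhds ht₀)] with t ht
  have hdenom : 1 - lam * t * q ^ m = -(lam * q ^ m * (t - t₀)) := by linear_combination -hpole
  have hqm : q ^ m ≠ 0 := zpow_ne_zero m hq
  rw [hdenom]
  field_simp
end

section
/- Let q ∈ ℂ with 0 < |q| < 1 and let h be a holomorphic function on ℂ∖{0} satisfying h(qt) + t·h(t) = 0 for every t ≠ 0. Then h vanishes identically on ℂ∖{0}. -/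
/-!
The equation `h (q * t) = -t * h t` makes `‖h‖` non-increasing along the orbits `q ^ n * t` inside
the unit disc. Every nonzero point of the disc lies on such an orbit starting in the compact annulus
`‖q‖ ≤ ‖t‖ ≤ 1`, so `h` is bounded near `0` and the singularity there is removable. If the extension
had a zero of finite order `n` at `0`, then `t ↦ h (q * t)` would have order `n` as well, whereas
`-t * h t` would have order `n + 1`. So `h` vanishes near `0`, and the identity theorem concludes.

Only the decay of the factor `-t` at `0` matters, so it may be any `a t → 0`. When `‖q‖ = 1` the
orbits stay on circles, and on a small circle the maximum of `‖h‖` is at most half of itself.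
-/

open Filter Topology Metric Set

section Orbits

variable {𝕜 V E : Type*} [NormedField 𝕜] [NormedAddCommGroup V] [NormedSpace 𝕜 V]
  {q : 𝕜} {r : ℝ}

theorem exists_pow_smul_eq_of_norm_le (hq0 : q ≠ 0) (hq1 : ‖q‖ < 1) {v : V} (hv : v ≠ 0)
    (hvr : ‖v‖ ≤ r) : ∃ (n : ℕ) (w : V), q ^ n • w = v ∧ ‖q‖ * r ≤ ‖w‖ ∧ ‖w‖ ≤ r := by
  have hr : 0 < r := (norm_pos_iff.2 hv).trans_le hvr
  obtain ⟨n, hlt, hle⟩ := exists_nat_pow_near_of_lt_one (div_pos (norm_pos_iff.2 hv) hr)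
    ((div_le_one hr).2 hvr) (norm_pos_iff.2 hq0) hq1
  have hpow : 0 < ‖q‖ ^ n := pow_pos (norm_pos_iff.2 hq0) n
  have hnorm : ‖(q ^ n)⁻¹ • v‖ = ‖v‖ / ‖q‖ ^ n := by
    rw [norm_smul, norm_inv, norm_pow, inv_mul_eq_div]
  refine ⟨n, (q ^ n)⁻¹ • v, smul_inv_smul₀ (pow_ne_zero n hq0) v, ?_, ?_⟩
  · rw [hnorm, le_div_iff₀ hpow, mul_right_comm, ← pow_succ']
    exact ((lt_div_iff₀ hr).1 hlt).le
  · rw [hnorm, div_le_iff₀' hpow]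
    exact (div_le_iff₀ hr).1 hle

theorem norm_apply_pow_smul_le [Norm E] {h : V → E} (hq0 : q ≠ 0) (hq1 : ‖q‖ ≤ 1)
    (hle : ∀ v ≠ 0, ‖v‖ ≤ r → ‖h (q • v)‖ ≤ ‖h v‖) {w : V} (hw : w ≠ 0) (hwr : ‖w‖ ≤ r) (n : ℕ) :
    ‖h (q ^ n • w)‖ ≤ ‖h w‖ := by
  induction n with
  | zero => rw [pow_zero, one_smul]
  | succ n ih =>
    have hnorm : ‖q ^ n • w‖ ≤ r := by
      rw [norm_smul, norm_pow]
      exact (mul_le_of_le_one_left (norm_nonneg w) (pow_le_one₀ (norm_nonneg q) hq1)).trans hwr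
    rw [pow_succ', mul_smul]
    exact (hle _ (smul_ne_zero (pow_ne_zero n hq0) hw) hnorm).trans ih

variable [ProperSpace V] [NormedAddGroup E] {h : V → E}

theorem isBoundedUnder_norm_of_norm_comp_smul_le (hq0 : q ≠ 0) (hq1 : ‖q‖ < 1)
    (hcont : ∀ᶠ v in 𝓝[≠] 0, ContinuousAt h v) (hle : ∀ᶠ v in 𝓝[≠] 0, ‖h (q • v)‖ ≤ ‖h v‖) :
    IsBoundedUnder (· ≤ ·) (𝓝[≠] 0) fun v ↦ ‖h v‖ := by
  have hbasis := nhdsWithin_hasBasis (nhds_basis_closedBall (x := (0 : V))) {0}ᶜ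
  obtain ⟨r, hr, hball⟩ := hbasis.eventually_iff.1 (hcont.and hle)
  simp only [mem_inter_iff, mem_closedBall_zero_iff, mem_compl_singleton_iff, and_imp] at hball
  have hne {w : V} (hw : ‖q‖ * r ≤ ‖w‖) : w ≠ 0 :=
    norm_pos_iff.1 ((mul_pos (norm_pos_iff.2 hq0) hr).trans_le hw)
  have hannulus : IsCompact (closedBall (0 : V) r ∩ {w | ‖q‖ * r ≤ ‖w‖}) :=
    (isCompact_closedBall 0 r).inter_right (isClosed_le continuous_const continuous_norm)
  obtain ⟨M, hM⟩ := hannulus.exists_bound_of_continuousOn (f := h) fun w hw ↦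
    (hball (mem_closedBall_zero_iff.1 hw.1) (hne hw.2)).1.continuousWithinAt
  refine isBoundedUnder_of_eventually_le (a := M) (hbasis.eventually_iff.2 ⟨r, hr, ?_⟩)
  rintro v ⟨hvr, hv⟩
  obtain ⟨n, w, rfl, hw, hwr⟩ :=
    exists_pow_smul_eq_of_norm_le hq0 hq1 hv (mem_closedBall_zero_iff.1 hvr)
  calc ‖h (q ^ n • w)‖ ≤ ‖h w‖ :=
        norm_apply_pow_smul_le hq0 hq1.le (fun v hv hvr ↦ (hball hvr hv).2) (hne hw) hwr n
    _ ≤ M := hM w ⟨mem_closedBall_zero_iff.2 hwr, hw⟩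

theorem eqOn_zero_of_surjOn_of_norm_comp_le {X : Type*} [TopologicalSpace X] {K : Set X}
    {f : X → X} {h : X → E} {c : ℝ} (hK : IsCompact K) (hf : SurjOn f K K)
    (hcont : ContinuousOn h K) (hc : c < 1) (hle : ∀ x ∈ K, ‖h (f x)‖ ≤ c * ‖h x‖) :
    EqOn h 0 K := by
  intro x hx
  obtain ⟨z, hz, hmax⟩ := hK.exists_isMaxOn ⟨x, hx⟩ hcont.norm
  obtain ⟨w, hw, rfl⟩ := hf hz
  have hwz : ‖h w‖ ≤ ‖h (f w)‖ := hmax hw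
  have hxz : ‖h x‖ ≤ ‖h (f w)‖ := hmax hx
  have hw_zero : ‖h w‖ = 0 := by nlinarith [hle w hw, norm_nonneg (h w)]
  have hmax_zero : ‖h (f w)‖ ≤ 0 := by simpa [hw_zero] using hle w hw
  exact norm_le_zero_iff.1 (hxz.trans hmax_zero)

theorem eventually_eq_zero_of_norm_comp_smul_le {c : ℝ} (hq : ‖q‖ = 1) (hc : c < 1)
    (hcont : ∀ᶠ v in 𝓝[≠] 0, ContinuousAt h v) (hle : ∀ᶠ v in 𝓝[≠] 0, ‖h (q • v)‖ ≤ c * ‖h v‖) :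
    ∀ᶠ v in 𝓝[≠] 0, h v = 0 := by
  have hbasis := nhdsWithin_hasBasis (nhds_basis_closedBall (x := (0 : V))) {0}ᶜ
  obtain ⟨r, hr, hball⟩ := hbasis.eventually_iff.1 (hcont.and hle)
  refine hbasis.eventually_iff.2 ⟨r, hr, ?_⟩
  rintro v ⟨hvr, hv⟩
  have hq0 : q ≠ 0 := norm_ne_zero_iff.1 (hq ▸ one_ne_zero)
  have hsphere {w : V} (hw : w ∈ sphere 0 ‖v‖) : w ∈ closedBall 0 r ∩ {0}ᶜ := by
    rw [mem_sphere_zero_iff_norm] at hw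
    exact ⟨by simpa [hw] using hvr, norm_ne_zero_iff.1 (hw ▸ norm_ne_zero_iff.2 hv)⟩
  have hsurj : SurjOn (q • ·) (sphere (0 : V) ‖v‖) (sphere 0 ‖v‖) := fun w hw ↦
    ⟨q⁻¹ • w, by simpa [norm_smul, hq] using hw, smul_inv_smul₀ hq0 w⟩
  exact eqOn_zero_of_surjOn_of_norm_comp_le (isCompact_sphere 0 ‖v‖) hsurj
    (fun w hw ↦ (hball (hsphere hw)).1.continuousWithinAt) hc
    (fun w hw ↦ (hball (hsphere hw)).2) (mem_sphere_zero_iff_norm.2 rfl)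

end Orbits

theorem tendsto_const_mul_nhdsNE_zero {𝕜 : Type*} [NormedField 𝕜] {q : 𝕜} (hq : q ≠ 0) :
    Tendsto (q * ·) (𝓝[≠] 0) (𝓝[≠] 0) := by
  simpa [Tendsto] using ((Homeomorph.mulLeft₀ q hq).map_punctured_nhds_eq 0).le

theorem eventually_eq_zero_of_analyticAt_of_comp_mul_eq_smul {𝕜 E : Type*}
    [NontriviallyNormedField 𝕜] [NormedAddCommGroup E] [NormedSpace 𝕜 E] {q : 𝕜} {a : 𝕜 → 𝕜}
    {g : 𝕜 → E} (hq : q ≠ 0) (ha : Tendsto a (𝓝[≠] 0) (𝓝 0)) (hg : AnalyticAt 𝕜 g 0)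
    (heq : ∀ᶠ t in 𝓝[≠] 0, g (q * t) = a t • g t) : ∀ᶠ t in 𝓝 0, g t = 0 := by
  by_contra hne
  obtain ⟨n, k, hk, hk0, hgk⟩ := hg.exists_eventuallyEq_pow_smul_nonzero_iff.2 hne
  simp only [sub_zero] at hgk
  have hmul := tendsto_const_mul_nhdsNE_zero hq
  have hk_lim : Tendsto k (𝓝[≠] 0) (𝓝 (k 0)) :=
    hk.continuousAt.tendsto.mono_left nhdsWithin_le_nhds
  have hk_eq : ∀ᶠ t in 𝓝[≠] 0, q ^ n • k (q * t) = a t • k t := by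
    have hgk' := hgk.filter_mono (nhdsWithin_le_nhds (s := {0}ᶜ))
    filter_upwards [self_mem_nhdsWithin, heq, hgk', hmul.eventually hgk'] with t ht h_eq hgt hgqt
    rw [hgt, hgqt, mul_pow, mul_comm, mul_smul, smul_comm (a t)] at h_eq
    exact smul_right_injective E (pow_ne_zero n ht) h_eq
  have hlim : q ^ n • k 0 = (0 : 𝕜) • k 0 :=
    tendsto_nhds_unique_of_eventuallyEq ((hk_lim.comp hmul).const_smul (q ^ n)) (ha.smul hk_lim)
      hk_eq
  rw [zero_smul] at hlim
  exact smul_ne_zero (pow_ne_zero n hq) hk0 hlim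

section Holomorphic

variable {E : Type*} [NormedAddCommGroup E] [NormedSpace ℂ E] [CompleteSpace E] {h : ℂ → E} {c : ℂ}

theorem exists_analyticAt_eventuallyEq_of_isBoundedUnder
    (hd : ∀ᶠ z in 𝓝[≠] c, DifferentiableAt ℂ h z)
    (hb : IsBoundedUnder (· ≤ ·) (𝓝[≠] c) fun z ↦ ‖h z‖) :
    ∃ g : ℂ → E, AnalyticAt ℂ g c ∧ g =ᶠ[𝓝[≠] c] h := by
  obtain ⟨M, hM⟩ := hb
  have hlim := Complex.tendsto_limUnder_of_differentiable_on_punctured_nhds_of_bounded_under hd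
    ⟨M + ‖h c‖, eventually_map.2 <| (eventually_map.1 hM).mono fun _ hz ↦
      norm_sub_le_of_le hz le_rfl⟩
  refine ⟨Function.update h c (limUnder (𝓝[≠] c) h),
    Complex.analyticAt_of_differentiable_on_punctured_nhds_of_continuousAt ?_
      (continuousAt_update_same.2 hlim), ?_⟩
  · filter_upwards [hd, self_mem_nhdsWithin] with z hz hzc
    exact hz.congr_of_eventuallyEq
      ((eventually_ne_nhds hzc).mono fun w hw ↦ Function.update_of_ne hw _ _)
  · exact eventually_mem_nhdsWithin.mono fun z hz ↦ Function.update_of_ne hz _ _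

theorem eqOn_zero_of_differentiableOn_compl_singleton_of_eventually_eq_zero
    (hd : DifferentiableOn ℂ h {c}ᶜ) (hzero : ∀ᶠ z in 𝓝[≠] c, h z = 0) : EqOn h 0 {c}ᶜ := by
  obtain ⟨z, hz, hzc⟩ :=
    ((eventually_eventually_nhdsWithin.2 hzero).and eventually_mem_nhdsWithin).exists
  rw [isOpen_compl_singleton.nhdsWithin_eq hzc] at hz
  exact (hd.analyticOnNhd isOpen_compl_singleton).eqOn_zero_of_preconnected_of_eventuallyEq_zero
    (isConnected_compl_singleton_of_one_lt_rank (by simp) c).isPreconnected hzc hz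

variable {q : ℂ} {a : ℂ → ℂ}

theorem eventually_eq_zero_of_comp_mul_eq_smul (hq0 : q ≠ 0) (hq1 : ‖q‖ ≤ 1)
    (ha : Tendsto a (𝓝[≠] 0) (𝓝 0)) (hd : ∀ᶠ t in 𝓝[≠] 0, DifferentiableAt ℂ h t)
    (heq : ∀ᶠ t in 𝓝[≠] 0, h (q * t) = a t • h t) : ∀ᶠ t in 𝓝[≠] 0, h t = 0 := by
  have hcont : ∀ᶠ t in 𝓝[≠] 0, ContinuousAt h t := hd.mono fun t ht ↦ ht.continuousAt
  have hle {ε : ℝ} (hε : 0 < ε) : ∀ᶠ t in 𝓝[≠] 0, ‖h (q * t)‖ ≤ ε * ‖h t‖ := by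
    filter_upwards [heq, ha.norm.eventually_le_const (by simpa using hε)] with t ht hat
    rw [ht, norm_smul]
    gcongr
  obtain hq | hq := hq1.eq_or_lt
  · exact eventually_eq_zero_of_norm_comp_smul_le hq one_half_lt_one hcont (hle one_half_pos)
  obtain ⟨g, hg, hgh⟩ := exists_analyticAt_eventuallyEq_of_isBoundedUnder hd
    (isBoundedUnder_norm_of_norm_comp_smul_le hq0 hq hcont (by simpa using hle one_pos))
  have hg_eq : ∀ᶠ t in 𝓝[≠] 0, g (q * t) = a t • g t := by
    filter_upwards [heq, hgh, (tendsto_const_mul_nhdsNE_zero hq0).eventually hgh] with t ht hgt hgqt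
    rw [hgt, hgqt, ht]
  have hg_zero := eventually_eq_zero_of_analyticAt_of_comp_mul_eq_smul hq0 ha hg hg_eq
  filter_upwards [hgh, hg_zero.filter_mono nhdsWithin_le_nhds] with t hgt hgt0
  rw [← hgt, hgt0]

theorem holomorphic_solution_vanishes_general (hq0 : q ≠ 0) (hq1 : ‖q‖ ≤ 1)
    (ha : Tendsto a (𝓝[≠] 0) (𝓝 0)) (hd : DifferentiableOn ℂ h {0}ᶜ)
    (heq : ∀ᶠ t in 𝓝[≠] 0, h (q * t) = a t • h t) : EqOn h 0 {0}ᶜ :=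
  eqOn_zero_of_differentiableOn_compl_singleton_of_eventually_eq_zero hd <|
    eventually_eq_zero_of_comp_mul_eq_smul hq0 hq1 ha
      (eventually_mem_nhdsWithin.mono fun _ ht ↦
        hd.differentiableAt (isOpen_compl_singleton.mem_nhds ht)) heq

end Holomorphic

/-- A function holomorphic on `ℂ∖{0}` satisfying `h(qt) + t·h(t) = 0` for all
`t ≠ 0` (with `0 < |q| < 1`) vanishes identically on `ℂ∖{0}`. -/
theorem holomorphic_solution_vanishes
    (q : ℂ) (hq0 : 0 < ‖q‖) (hq1 : ‖q‖ < 1)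
    (h : ℂ → ℂ) (hhol : ∀ t : ℂ, t ≠ 0 → DifferentiableAt ℂ h t)
    (heq : ∀ t : ℂ, t ≠ 0 → h (q * t) + t * h t = 0) :
    ∀ t : ℂ, t ≠ 0 → h t = 0 := by
  have hneg : Tendsto (fun t : ℂ ↦ -t) (𝓝[≠] 0) (𝓝 0) :=
    (continuous_neg.tendsto' 0 0 neg_zero).mono_left nhdsWithin_le_nhds
  exact holomorphic_solution_vanishes_general (norm_pos_iff.1 hq0) hq1.le hneg
    (fun t ht ↦ (hhol t ht).differentiableWithinAt)
    (eventually_mem_nhdsWithin.mono fun t ht ↦ by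
      rw [eq_neg_of_add_eq_zero_left (heq t ht), smul_eq_mul, neg_mul])
end

section
/- Let q ∈ ℂ with 0 < |q| < 1 and let h be a holomorphic function on ℂ∖{0} satisfying the q-difference equation of the 4₁ knot, tq·h(qt) + (1 − 2t)·h(t) + tq^{−1}·h(q^{−1}t) = 0, for every t ≠ 0. Then there exists a constant C ∈ ℂ such that h(t) = C · g^{(0,0)}(t,q) for all t ≠ 0. -/
open Finset Filter

/-!
The Laurent coefficients `a n` of a function holomorphic on `ℂ ∖ {0}` are turned by the
`q`-difference equation into a solution of
`a (n + 1) = (2 - q ^ (n + 1) - q ^ (-(n + 1))) a n = -(1 - q ^ (n + 1)) ^ 2 q ^ (-(n + 1)) a n`.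
The factor vanishes at `n = -1`, which kills `a 0` and hence every nonnegative coefficient; at
`n < -1` it does not vanish as long as `q` is not a root of unity, so the recursion can be solved
downwards from `a (-1)` and yields the coefficients of `g00`. The series of `g00` converges wherever
it is needed because it is, up to the factor `a (-1)`, the Laurent series of the given function.
-/

open Real (circleAverage)
open Metric (sphere)

section CircleAverage

variable {E : Type*} [NormedAddCommGroup E]

lemma norm_circleAverage_le_of_norm_le [NormedSpace ℝ E] {f : ℂ → E} {c : ℂ} {R M : ℝ}
    (hf : ∀ z ∈ sphere c |R|, ‖f z‖ ≤ M) : ‖circleAverage f c R‖ ≤ M := by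
  have hbound : ‖∫ θ in 0..2 * Real.pi, f (circleMap c R θ)‖ ≤ M * |2 * Real.pi - 0| :=
    intervalIntegral.norm_integral_le_of_norm_le_const fun θ _ =>
      hf _ (circleMap_mem_sphere' c R θ)
  rw [sub_zero, abs_of_pos Real.two_pi_pos] at hbound
  rw [Real.circleAverage_def, norm_smul, norm_inv, Real.norm_of_nonneg Real.two_pi_pos.le]
  exact (inv_mul_le_iff₀' Real.two_pi_pos).2 hbound

lemma circleAverage_comp_mul_left [NormedSpace ℝ E] (f : ℂ → E) (s : ℂ) (R : ℝ) :
    circleAverage (fun z => f (s * z)) 0 R = circleAverage f 0 (‖s‖ * R) := by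
  have hrotate (θ : ℝ) : s * circleMap 0 R θ = circleMap 0 (‖s‖ * R) (θ + s.arg) := by
    conv_lhs => rw [← Complex.norm_mul_exp_arg_mul_I s]
    simp only [circleMap_zero, Complex.ofReal_mul, Complex.ofReal_add, add_mul, Complex.exp_add]
    ring
  simp only [Real.circleAverage_eq_integral_add (f := f) s.arg, Real.circleAverage_def, hrotate]

lemma circleAverage_eq_of_differentiableOn_compl_center [NormedSpace ℂ E] {f : ℂ → E} {c : ℂ}
    (hf : DifferentiableOn ℂ f {c}ᶜ) {r R : ℝ} (hr : 0 < r) (hR : 0 < R) :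
    circleAverage f c r = circleAverage f c R := by
  wlog hrR : r ≤ R generalizing r R
  · exact (this hR hr (le_of_not_ge hrR)).symm
  rw [Real.circleAverage_eq_circleIntegral hr.ne', Real.circleAverage_eq_circleIntegral hR.ne']
  congr 1
  refine (Complex.circleIntegral_sub_center_inv_smul_eq_of_differentiable_on_annulus_off_countable
    hr hrR Set.countable_empty (hf.continuousOn.mono ?_) ?_).symm
  · rintro _ ⟨-, hz⟩ rfl
    exact hz (Metric.mem_ball_self hr)
  · rintro z ⟨⟨-, hz⟩, -⟩
    have hzc : z ≠ c := fun h => hz (h ▸ Metric.mem_closedBall_self hr.le)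
    exact hf.differentiableAt (isOpen_compl_singleton.mem_nhds hzc)

end CircleAverage

section Laurent

variable {E : Type*} [NormedAddCommGroup E] [NormedSpace ℂ E] {f g : ℂ → E}

/-- The `n`-th Laurent coefficient at `0` of a function holomorphic on `ℂ ∖ {0}`,
`(2πi)⁻¹ ∮ z ^ (-n - 1) f(z) dz` over the unit circle, written as an average over that circle. -/
noncomputable def laurentCoeff (f : ℂ → E) (n : ℤ) : E :=
  circleAverage (fun z => z ^ (-n) • f z) 0 1

lemma unitSphere_subset_compl_zero : sphere (0 : ℂ) 1 ⊆ {0}ᶜ :=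
  fun z hz => ne_zero_of_mem_unit_sphere ⟨z, hz⟩

lemma continuousOn_zpow_smul_sphere (hf : ContinuousOn f (sphere 0 1)) (n : ℤ) :
    ContinuousOn (fun z => z ^ n • f z) (sphere 0 1) :=
  (continuousOn_id.zpow₀ n fun _ hz => .inl (unitSphere_subset_compl_zero hz)).smul hf

lemma laurentCoeff_congr (hfg : Set.EqOn f g (sphere 0 1)) : laurentCoeff f = laurentCoeff g := by
  ext n
  refine Real.circleAverage_congr_sphere fun z hz => ?_
  rw [abs_one] at hz
  simp only [hfg hz]

lemma laurentCoeff_sub (hf : ContinuousOn f (sphere 0 1)) (hg : ContinuousOn g (sphere 0 1)) :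
    laurentCoeff (f - g) = laurentCoeff f - laurentCoeff g := by
  ext n
  simp only [laurentCoeff, Pi.sub_apply, smul_sub]
  exact Real.circleAverage_fun_sub
    ((continuousOn_zpow_smul_sphere hf _).circleIntegrable zero_le_one)
    ((continuousOn_zpow_smul_sphere hg _).circleIntegrable zero_le_one)

lemma laurentCoeff_const_smul (a : ℂ) (f : ℂ → E) :
    laurentCoeff (a • f) = a • laurentCoeff f := by
  ext n
  simp only [laurentCoeff, Pi.smul_apply, smul_comm _ a, Real.circleAverage_fun_smul]

lemma laurentCoeff_id_smul (f : ℂ → E) (n : ℤ) :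
    laurentCoeff (fun z => z • f z) (n + 1) = laurentCoeff f n := by
  refine Real.circleAverage_congr_sphere fun z hz => ?_
  rw [abs_one] at hz
  simp only [smul_smul, ← zpow_add_one₀ (unitSphere_subset_compl_zero hz), neg_add,
    neg_add_cancel_right]

lemma laurentCoeff_comp_mul_left (hf : DifferentiableOn ℂ f {0}ᶜ) {s : ℂ} (hs : s ≠ 0) (n : ℤ) :
    laurentCoeff (fun z => f (s * z)) n = s ^ n • laurentCoeff f n := by
  have hdiff : DifferentiableOn ℂ (fun z => z ^ (-n) • f z) {0}ᶜ :=
    (differentiableOn_zpow (-n) _ (.inl (by simp))).smul hf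
  calc laurentCoeff (fun z => f (s * z)) n
      = circleAverage (fun z => s ^ n • (s * z) ^ (-n) • f (s * z)) 0 1 := by
        simp only [laurentCoeff, smul_smul, mul_zpow, ← mul_assoc, ← zpow_add₀ hs, add_neg_cancel,
          zpow_zero, one_mul]
    _ = s ^ n • circleAverage (fun z => z ^ (-n) • f z) 0 (‖s‖ * 1) := by
        rw [Real.circleAverage_fun_smul,
          circleAverage_comp_mul_left (fun z => z ^ (-n) • f z)]
    _ = s ^ n • laurentCoeff f n := by
        rw [mul_one, circleAverage_eq_of_differentiableOn_compl_center hdiff (norm_pos_iff.2 hs)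
          one_pos, laurentCoeff]

lemma laurentCoeff_clm_comp [CompleteSpace E] {F : Type*} [NormedAddCommGroup F] [NormedSpace ℂ F]
    [CompleteSpace F] (L : E →L[ℂ] F) (hf : ContinuousOn f (sphere 0 1)) :
    laurentCoeff (L ∘ f) = L ∘ laurentCoeff f := by
  ext n
  have hint := (continuousOn_zpow_smul_sphere hf (-n)).circleIntegrable zero_le_one
  simpa only [laurentCoeff, Function.comp_def, map_smul, ContinuousLinearMap.coe_restrictScalars']
    using (L.restrictScalars ℝ).circleAverage_comp_comm hint

lemma exists_norm_laurentCoeff_le (hf : ContinuousOn f (sphere 0 1)) :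
    ∃ M, ∀ n, ‖laurentCoeff f n‖ ≤ M := by
  obtain ⟨M, hM⟩ := (isCompact_sphere (0 : ℂ) 1).exists_bound_of_continuousOn hf
  refine ⟨M, fun n => norm_circleAverage_le_of_norm_le fun z hz => ?_⟩
  rw [abs_one] at hz
  rw [norm_smul, norm_zpow, mem_sphere_zero_iff_norm.1 hz, one_zpow, one_mul]
  exact hM z hz

lemma differentiableOn_comp_mul_left (hf : DifferentiableOn ℂ f {0}ᶜ) {s : ℂ} (hs : s ≠ 0) :
    DifferentiableOn ℂ (fun z => f (s * z)) {0}ᶜ :=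
  hf.comp (differentiableOn_id.const_mul s) fun _ hz => mul_ne_zero hs hz

lemma exists_norm_zpow_smul_laurentCoeff_le (hf : DifferentiableOn ℂ f {0}ᶜ) {s : ℂ}
    (hs : s ≠ 0) : ∃ M, ∀ n : ℤ, ‖s ^ n • laurentCoeff f n‖ ≤ M := by
  simpa only [laurentCoeff_comp_mul_left hf hs] using exists_norm_laurentCoeff_le
    ((differentiableOn_comp_mul_left hf hs).continuousOn.mono unitSphere_subset_compl_zero)

lemma summable_zpow_smul_laurentCoeff [CompleteSpace E] (hf : DifferentiableOn ℂ f {0}ᶜ) {t : ℂ}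
    (ht : t ≠ 0) : Summable fun n : ℤ => t ^ n • laurentCoeff f n := by
  obtain ⟨M, hM⟩ := exists_norm_zpow_smul_laurentCoeff_le hf (mul_ne_zero two_ne_zero ht)
  obtain ⟨M', hM'⟩ := exists_norm_zpow_smul_laurentCoeff_le hf (div_ne_zero ht two_ne_zero)
  refine .of_nat_of_neg
    (.of_norm_bounded (g := fun n => (1 / 2) ^ n * M) (summable_geometric_two.mul_right M)
      fun n => ?_)
    (.of_norm_bounded (g := fun n => (1 / 2) ^ n * M') (summable_geometric_two.mul_right M')
      fun n => ?_)
  · calc ‖t ^ (n : ℤ) • laurentCoeff f n‖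
        = (1 / 2) ^ n * ‖(2 * t) ^ (n : ℤ) • laurentCoeff f n‖ := by
          simp only [norm_smul, zpow_natCast, norm_pow, norm_mul, mul_pow, one_div, inv_pow,
            Complex.norm_ofNat]
          field_simp
      _ ≤ (1 / 2) ^ n * M := by gcongr; exact hM n
  · calc ‖t ^ (-n : ℤ) • laurentCoeff f (-n)‖
        = (1 / 2) ^ n * ‖(t / 2) ^ (-n : ℤ) • laurentCoeff f (-n)‖ := by
          simp only [norm_smul, zpow_neg, zpow_natCast, norm_inv, norm_pow, norm_div, div_pow,
            one_div, inv_pow, Complex.norm_ofNat]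
          field_simp
      _ ≤ (1 / 2) ^ n * M' := by gcongr; exact hM' (-n)

lemma fourierCoeff_comp_toCircle [Fact (0 < 2 * Real.pi)] (f : ℂ → E) (n : ℤ) :
    fourierCoeff (fun x : AddCircle (2 * Real.pi) => f (AddCircle.toCircle x)) n =
      laurentCoeff f n := by
  have htoCircle (θ : ℝ) :
      (AddCircle.toCircle (θ : AddCircle (2 * Real.pi)) : ℂ) = circleMap 0 1 θ := by
    simp [AddCircle.toCircle_apply_mk, circleMap]
  rw [fourierCoeff_eq_intervalIntegral _ n 0, laurentCoeff, Real.circleAverage_def]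
  simp only [zero_add, one_div, fourier_apply, AddCircle.toCircle_zsmul, Circle.coe_zpow,
    htoCircle]

lemma hasSum_laurentCoeff_complex {f : ℂ → ℂ} (hf : ContinuousOn f (sphere 0 1))
    (hsum : Summable (laurentCoeff f)) : HasSum (laurentCoeff f) (f 1) := by
  have : Fact (0 < 2 * Real.pi) := ⟨Real.two_pi_pos⟩
  let F : C(AddCircle (2 * Real.pi), ℂ) :=
    ⟨fun x => f (AddCircle.toCircle x), hf.comp_continuous
      (continuous_subtype_val.comp AddCircle.continuous_toCircle)
      fun x => mem_sphere_zero_iff_norm.2 (Circle.norm_coe _)⟩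
  have hcoeff : fourierCoeff F = laurentCoeff f := funext (fourierCoeff_comp_toCircle f)
  have hfourier := has_pointwise_sum_fourier_series_of_summable (hcoeff ▸ hsum) 0
  rw [hcoeff] at hfourier
  simpa [F] using hfourier

lemma hasSum_laurentCoeff [CompleteSpace E] (hf : ContinuousOn f (sphere 0 1))
    (hsum : Summable (laurentCoeff f)) : HasSum (laurentCoeff f) (f 1) := by
  -- Pointwise Fourier inversion is a scalar statement, so it is tested against functionals.
  suffices ∑' n, laurentCoeff f n = f 1 from this ▸ hsum.hasSum
  refine (SeparatingDual.eq_iff_forall_dual_eq (R := ℂ)).2 fun L => ?_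
  have hcomp := laurentCoeff_clm_comp L hf
  have hscalar : HasSum (L ∘ laurentCoeff f) (L (f 1)) :=
    hcomp ▸ hasSum_laurentCoeff_complex (L.continuous.comp_continuousOn hf)
      (hcomp ▸ hsum.mapL L)
  exact (hsum.hasSum.mapL L).unique hscalar

theorem hasSum_zpow_smul_laurentCoeff [CompleteSpace E] (hf : DifferentiableOn ℂ f {0}ᶜ) {t : ℂ}
    (ht : t ≠ 0) : HasSum (fun n : ℤ => t ^ n • laurentCoeff f n) (f t) := by
  have hscale : laurentCoeff (fun z => f (t * z)) = fun n => t ^ n • laurentCoeff f n :=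
    funext (laurentCoeff_comp_mul_left hf ht)
  simpa only [hscale, mul_one] using hasSum_laurentCoeff
    ((differentiableOn_comp_mul_left hf ht).continuousOn.mono unitSphere_subset_compl_zero)
    (hscale ▸ summable_zpow_smul_laurentCoeff hf ht)

end Laurent

lemma eq_tsum_smul_of_hasSum_smul {ι 𝕜 E : Type*} [RCLike 𝕜] [NormedAddCommGroup E]
    [NormedSpace 𝕜 E] {a : ι → 𝕜} {C x : E} (h : HasSum (fun i => a i • C) x) :
    x = (∑' i, a i) • C := by
  -- For `C = 0` the series `∑ a i` may diverge, but then both sides vanish.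
  rcases eq_or_ne C 0 with rfl | hC
  · simpa only [smul_zero] using h.unique (by simpa only [smul_zero] using hasSum_zero)
  obtain ⟨L, hL⟩ := SeparatingDual.exists_eq_one (R := 𝕜) hC
  have ha : Summable a := by simpa [hL] using (h.mapL L).summable
  exact h.unique (ha.hasSum.smul_const C)

section FormalSolution

/-- The coefficient of `t ^ (-1 - k)` in `g00 t q`. -/
noncomputable def g00Coeff (q : ℂ) (k : ℕ) : ℂ :=
  (-1) ^ k * q ^ (k * (k + 1) / 2) / qPoch q q k ^ 2

lemma g00Coeff_zero (q : ℂ) : g00Coeff q 0 = 1 := by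
  simp [g00Coeff, qPoch]

lemma g00Coeff_succ (q : ℂ) (k : ℕ) :
    g00Coeff q (k + 1) = -(q ^ (k + 1) / (1 - q ^ (k + 1)) ^ 2) * g00Coeff q k := by
  have hexp : (k + 1) * (k + 1 + 1) / 2 = k * (k + 1) / 2 + (k + 1) := by
    rw [show (k + 1) * (k + 1 + 1) = k * (k + 1) + (k + 1) * 2 by ring,
      Nat.add_mul_div_right _ _ two_pos]
  have hpoch : qPoch q q (k + 1) = qPoch q q k * (1 - q ^ (k + 1)) := by
    rw [qPoch, Finset.prod_range_succ, ← pow_succ', qPoch]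
  rw [g00Coeff, g00Coeff, hexp, hpoch, mul_pow, ← neg_div, div_mul_div_comm, mul_comm (_ ^ 2)]
  ring

variable {E : Type*} [AddCommGroup E] [Module ℂ E] {q : ℂ} {a : ℤ → E}

/-- The Laurent series `∑ a n t ^ n` solves the `q`-difference equation of the `4₁` knot formally:
the relation for `n` is the vanishing of the coefficient of `t ^ (n + 1)`. -/
def IsFormalSolution (q : ℂ) (a : ℤ → E) : Prop :=
  ∀ n : ℤ, a (n + 1) = (2 - q ^ (n + 1) - (q ^ (n + 1))⁻¹) • a n

namespace IsFormalSolution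

lemma apply_natCast (ha : IsFormalSolution q a) (n : ℕ) : a n = 0 := by
  induction n with
  | zero =>
    have hzero := ha (-1)
    rwa [neg_add_cancel, zpow_zero, inv_one, show (2 - 1 - 1 : ℂ) = 0 by norm_num,
      zero_smul] at hzero
  | succ n ih => rw [Nat.cast_succ, ha n, ih, smul_zero]

lemma apply_neg_one_sub_natCast (ha : IsFormalSolution q a) (hq : q ≠ 0)
    (hq_root : ¬IsOfFinOrder q) (k : ℕ) : a (-1 - k) = g00Coeff q k • a (-1) := by
  induction k with
  | zero => simp [g00Coeff_zero]
  | succ k ih =>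
    have hp : q ^ (k + 1) ≠ 0 := pow_ne_zero _ hq
    have hp_sub : 1 - q ^ (k + 1) ≠ 0 := fun h =>
      hq_root (isOfFinOrder_iff_pow_eq_one.2 ⟨k + 1, k.succ_pos, (sub_eq_zero.1 h).symm⟩)
    have hstep : a (-1 - k) =
        (2 - (q ^ (k + 1))⁻¹ - q ^ (k + 1)) • a (-1 - (k + 1 : ℕ)) := by
      have hexp : -1 - ((k + 1 : ℕ) : ℤ) + 1 = -((k + 1 : ℕ) : ℤ) := by ring
      have hrec := ha (-1 - (k + 1 : ℕ))
      rw [hexp, zpow_neg, zpow_natCast, inv_inv] at hrec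
      rw [← hrec]
      congr 1
      push_cast
      ring
    rw [g00Coeff_succ, mul_smul, ← ih, hstep, smul_smul]
    generalize q ^ (k + 1) = p at *
    have hinv : -(p / (1 - p) ^ 2) * (2 - p⁻¹ - p) = 1 := by
      field_simp
      ring
    rw [hinv, one_smul]

end IsFormalSolution

end FormalSolution

lemma isFormalSolution_laurentCoeff {E : Type*} [NormedAddCommGroup E] [NormedSpace ℂ E]
    {q : ℂ} (hq : q ≠ 0) {h : ℂ → E} (hhol : DifferentiableOn ℂ h {0}ᶜ)
    (heq : ∀ t : ℂ, t ≠ 0 →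
      (t * q) • h (q * t) + (1 - 2 * t) • h t + (t * q⁻¹) • h (q⁻¹ * t) = 0) :
    IsFormalSolution q (laurentCoeff h) := by
  intro n
  have hcont {s : ℂ} (hs : s ≠ 0) : ContinuousOn (fun z => h (s * z)) (sphere 0 1) :=
    (differentiableOn_comp_mul_left hhol hs).continuousOn.mono unitSphere_subset_compl_zero
  have hq_cont := (hcont hq).const_smul q
  have hqinv_cont := (hcont (inv_ne_zero hq)).const_smul q⁻¹
  have h_cont := (hhol.continuousOn.mono unitSphere_subset_compl_zero).const_smul (2 : ℂ)
  have hsolve : Set.EqOn h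
      (fun z => z • ((2 : ℂ) • h - q • (fun z => h (q * z)) - q⁻¹ • fun z => h (q⁻¹ * z)) z)
      (sphere 0 1) := by
    intro z hz
    have hz_eq := heq z (unitSphere_subset_compl_zero hz)
    simp only [Pi.sub_apply, Pi.smul_apply]
    linear_combination (norm := module) hz_eq
  rw [congrFun (laurentCoeff_congr hsolve) (n + 1), laurentCoeff_id_smul,
    laurentCoeff_sub (h_cont.sub hq_cont) hqinv_cont, laurentCoeff_sub h_cont hq_cont]
  simp only [laurentCoeff_const_smul, Pi.sub_apply, Pi.smul_apply,
    laurentCoeff_comp_mul_left hhol hq, laurentCoeff_comp_mul_left hhol (inv_ne_zero hq)]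
  rw [zpow_add_one₀ hq, inv_zpow, mul_inv]
  module

theorem holomorphic_solution_41_general {E : Type*} [NormedAddCommGroup E] [NormedSpace ℂ E]
    [CompleteSpace E] {q : ℂ} (hq : q ≠ 0) (hq_root : ¬IsOfFinOrder q)
    {h : ℂ → E} (hhol : DifferentiableOn ℂ h {0}ᶜ)
    (heq : ∀ t : ℂ, t ≠ 0 →
      (t * q) • h (q * t) + (1 - 2 * t) • h t + (t * q⁻¹) • h (q⁻¹ * t) = 0) :
    ∃ C : E, ∀ t : ℂ, t ≠ 0 → h t = g00 t q • C := by
  have hformal := isFormalSolution_laurentCoeff hq hhol heq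
  refine ⟨laurentCoeff h (-1), fun t ht => eq_tsum_smul_of_hasSum_smul ?_⟩
  have hinj : Function.Injective fun k : ℕ => -1 - (k : ℤ) := fun _ _ h => by
    simpa using h
  have hvanish : ∀ n ∉ Set.range fun k : ℕ => -1 - (k : ℤ), t ^ n • laurentCoeff h n = 0 := by
    intro n hn
    lift n to ℕ using by
      by_contra hneg
      exact hn ⟨(-1 - n).toNat, by grind⟩
    rw [hformal.apply_natCast, smul_zero]
  have hsum := (hinj.hasSum_iff hvanish).2 (hasSum_zpow_smul_laurentCoeff hhol ht)
  refine hsum.congr_fun fun k => ?_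
  rw [Function.comp_apply, hformal.apply_neg_one_sub_natCast hq hq_root, smul_smul, mul_comm,
    g00Coeff]

/-- Every function holomorphic on `ℂ∖{0}` satisfying the q-difference equation of
the 4₁ knot is a constant multiple of `g^{(0,0)}`. -/
theorem holomorphic_solution_41
    (q : ℂ) (hq0 : 0 < ‖q‖) (hq1 : ‖q‖ < 1)
    (h : ℂ → ℂ) (hhol : ∀ t : ℂ, t ≠ 0 → DifferentiableAt ℂ h t)
    (heq : ∀ t : ℂ, t ≠ 0 →
      t * q * h (q * t) + (1 - 2 * t) * h t + t * q⁻¹ * h (q⁻¹ * t) = 0) :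
    ∃ C : ℂ, ∀ t : ℂ, t ≠ 0 → h t = C * g00 t q := by
  obtain ⟨C, hC⟩ := holomorphic_solution_41_general (norm_pos_iff.1 hq0)
    (fun hfin => hq1.ne hfin.norm_eq_one) (fun t ht => (hhol t ht).differentiableWithinAt) heq
  exact ⟨C, fun t ht => (hC t ht).trans (mul_comm _ _)⟩
end
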